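/- arXiv:2406.13293 — 3 statements merged into one kernel-verified Lean document; each statement's English description precedes it below -/
import Mathlib

section
/- The zeros u₀(K,c), u₁(K,c), u₂(K,c) of f are C¹ functions of (K,c) (u₁ on D₁; u₀ and u₂ on D₁ ∪ D₂), and for each fixed K they satisfy the limits: u₀(K,c) → u_M(K) and u₁(K,c) → u_M(K) as c → c_M(K), and u₀(K,c) → u_m(K) and u₂(K,c) → u_m(K) as c → c_m(K). -/
open Set Filter MeasureTheory

noncomputable section

namespace TrafficTW

/-- `f(u) = (K u - V(u) - c)/K`. -/
def fTV (V : ℝ → ℝ) (K c u : ℝ) : ℝ := (K * u - V u - c) / K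

/-- `f'(u) = (K - V'(u))/K`. -/
def fdTV (V' : ℝ → ℝ) (K u : ℝ) : ℝ := (K - V' u) / K

/-- `h(u,μ) = f'(u) + μ`. -/
def hTV (V' : ℝ → ℝ) (K μ u : ℝ) : ℝ := fdTV V' K u + μ

/-- `g₁(u) = 1/(τ κ(1/u))`. -/
def g1TV (κ : ℝ → ℝ) (τ u : ℝ) : ℝ := 1 / (τ * κ (1 / u))

/-- `g₂(u) = u/(2 τ κ(1/u))`. -/
def g2TV (κ : ℝ → ℝ) (τ u : ℝ) : ℝ := u / (2 * τ * κ (1 / u))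

/-- The traveling-wave system (TV): `u' = w`, `w' = g₁ f + g₂ h w`. -/
def IsTVSol (V V' κ : ℝ → ℝ) (τ K c μ : ℝ) (u w : ℝ → ℝ) : Prop :=
  (∀ z, HasDerivAt u (w z) z) ∧
  (∀ z, HasDerivAt w
    (g1TV κ τ (u z) * fTV V K c (u z) + g2TV κ τ (u z) * hTV V' K μ (u z) * w z) z)

/-- Assumption (A1), where `V'` and `V''` are the first and second derivatives of `V`. -/
def A1 (V V' V'' : ℝ → ℝ) (UM : ℝ) : Prop :=
  (∀ u ∈ Ici (0:ℝ), HasDerivWithinAt V (V' u) (Ici 0) u) ∧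
  ContinuousOn V' (Ici 0) ∧
  (∀ u ∈ Ioi (0:ℝ), HasDerivAt V' (V'' u) u) ∧
  ContinuousOn V'' (Ioi 0) ∧
  (∀ u, 0 < u → 0 < V' u) ∧ (∃ M, ∀ u, 0 < u → V' u ≤ M) ∧
  Tendsto V' atTop (nhds 0) ∧
  0 < UM ∧ (∀ u, 0 < u → V' u ≤ V' UM) ∧
  (∀ u, 0 < u → (V'' u = 0 ↔ u = UM))

/-- Assumption (A2). -/
def A2 (κ : ℝ → ℝ) : Prop :=
  ContDiffOn ℝ 1 κ (Ioi 0) ∧ ∀ ρ, 0 < ρ → 0 < κ ρ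

/-- `c₀ = -V(0)`. -/
def c0v (V : ℝ → ℝ) : ℝ := - V 0

/-- `c_M(K) = K u_M(K) - V(u_M(K))`, where `uMx` is the function `K ↦ u_M(K)`. -/
def cMf (V : ℝ → ℝ) (uMx : ℝ → ℝ) (K : ℝ) : ℝ := K * uMx K - V (uMx K)

/-- `c_m(K) = K u_m(K) - V(u_m(K))`, where `umx` is the function `K ↦ u_m(K)`. -/
def cmf (V : ℝ → ℝ) (umx : ℝ → ℝ) (K : ℝ) : ℝ := K * umx K - V (umx K)

/-- `c₁(K) = max (c₀, c_m(K))`. -/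
def c1f (V : ℝ → ℝ) (umx : ℝ → ℝ) (K : ℝ) : ℝ := max (c0v V) (cmf V umx K)

/-- `uMx K = u_M(K)` is the unique local maximum point of `u ↦ K u - V(u)`, characterized
by `u_M(K) ∈ (0, U_M)` and `V'(u_M(K)) = K`, for `K ∈ (K₀, K_M)`. -/
def UMaxHyp (V' : ℝ → ℝ) (UM : ℝ) (uMx : ℝ → ℝ) : Prop :=
  ∀ K, V' 0 < K → K < V' UM → uMx K ∈ Ioo 0 UM ∧ V' (uMx K) = K

/-- `umx K = u_m(K)` is the unique local minimum point of `u ↦ K u - V(u)`, characterized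
by `u_m(K) ∈ (U_M, ∞)` and `V'(u_m(K)) = K`, for `K ∈ (0, K_M)`. -/
def UMinHyp (V' : ℝ → ℝ) (UM : ℝ) (umx : ℝ → ℝ) : Prop :=
  ∀ K, 0 < K → K < V' UM → UM < umx K ∧ V' (umx K) = K

/-- Characterization of `K₁ ∈ (K₀, K_M)`: `c_m(K) < c₀` for `K < K₁` and `c_m(K) > c₀`
for `K > K₁`. -/
def K1Hyp (V V' : ℝ → ℝ) (UM : ℝ) (umx : ℝ → ℝ) (K₁ : ℝ) : Prop :=
  V' 0 < K₁ ∧ K₁ < V' UM ∧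
  (∀ K, 0 < K → K < K₁ → cmf V umx K < c0v V) ∧
  cmf V umx K₁ = c0v V ∧
  (∀ K, K₁ < K → K < V' UM → c0v V < cmf V umx K)

/-- The parameter region `D₁`. -/
def D1 (V V' : ℝ → ℝ) (UM : ℝ) (uMx umx : ℝ → ℝ) : Set (ℝ × ℝ) :=
  {p | V' 0 < p.1 ∧ p.1 < V' UM ∧ c1f V umx p.1 < p.2 ∧ p.2 < cMf V uMx p.1}

/-- The parameter region `D₂`. -/
def D2 (V V' : ℝ → ℝ) (umx : ℝ → ℝ) (K₁ : ℝ) : Set (ℝ × ℝ) :=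
  {p | (V' 0 < p.1 ∧ p.1 < K₁ ∧ p.2 = c0v V) ∨
       (0 < p.1 ∧ p.1 < K₁ ∧ cmf V umx p.1 < p.2 ∧ p.2 < c0v V)}

/-- For `(K,c) ∈ D₁`: `u₁ < u₀ < u₂` are the exactly three positive zeros of `f`. -/
def ZerosD1 (V : ℝ → ℝ) (K c u1 u0 u2 : ℝ) : Prop :=
  0 < u1 ∧ u1 < u0 ∧ u0 < u2 ∧
  fTV V K c u1 = 0 ∧ fTV V K c u0 = 0 ∧ fTV V K c u2 = 0 ∧
  ∀ u, 0 < u → fTV V K c u = 0 → u = u1 ∨ u = u0 ∨ u = u2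

/-- For `(K,c) ∈ D₂`: `u₀ < u₂` are the exactly two positive zeros of `f`. -/
def ZerosD2 (V : ℝ → ℝ) (K c u0 u2 : ℝ) : Prop :=
  0 < u0 ∧ u0 < u2 ∧ fTV V K c u0 = 0 ∧ fTV V K c u2 = 0 ∧
  ∀ u, 0 < u → fTV V K c u = 0 → u = u0 ∨ u = u2

/-- Condition (HE1). -/
def HE1 (u1 u2 : ℝ) (u w : ℝ → ℝ) : Prop :=
  Tendsto u atBot (nhds u1) ∧ Tendsto u atTop (nhds u2) ∧
  Tendsto w atBot (nhds 0) ∧ Tendsto w atTop (nhds 0) ∧ ∀ z, 0 < w z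

/-- Condition (HE2). -/
def HE2 (u1 u2 : ℝ) (u w : ℝ → ℝ) : Prop :=
  Tendsto u atBot (nhds u2) ∧ Tendsto u atTop (nhds u1) ∧
  Tendsto w atBot (nhds 0) ∧ Tendsto w atTop (nhds 0) ∧ ∀ z, w z < 0

/-- Condition (HO) with level `ub`. -/
def HO (ub : ℝ) (u w : ℝ → ℝ) : Prop :=
  Tendsto u atBot (nhds ub) ∧ Tendsto u atTop (nhds ub) ∧
  Tendsto w atBot (nhds 0) ∧ Tendsto w atTop (nhds 0) ∧
  ¬ (∀ z, u z = ub ∧ w z = 0)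

/-- (TV) with parameter `μ` has a positive solution satisfying (HE1). -/
def HasHE1 (V V' κ : ℝ → ℝ) (τ K c μ u1 u2 : ℝ) : Prop :=
  ∃ u w : ℝ → ℝ, IsTVSol V V' κ τ K c μ u w ∧ (∀ z, 0 < u z) ∧ HE1 u1 u2 u w

/-- (TV) with parameter `μ` has a positive solution satisfying (HE2). -/
def HasHE2 (V V' κ : ℝ → ℝ) (τ K c μ u1 u2 : ℝ) : Prop :=
  ∃ u w : ℝ → ℝ, IsTVSol V V' κ τ K c μ u w ∧ (∀ z, 0 < u z) ∧ HE2 u1 u2 u w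

/-- (TV) with parameter `μ` has a positive solution satisfying (HO) with level `ub`. -/
def HasHO (V V' κ : ℝ → ℝ) (τ K c μ ub : ℝ) : Prop :=
  ∃ u w : ℝ → ℝ, IsTVSol V V' κ τ K c μ u w ∧ (∀ z, 0 < u z) ∧ HO ub u w

/-- Condition (H): `∫₁^∞ dρ/(ρ³ κ(ρ)) = ∞`. -/
def CondH (κ : ℝ → ℝ) : Prop :=
  ¬ IntegrableOn (fun ρ => 1 / (ρ ^ 3 * κ ρ)) (Ioi 1)

/-- Condition (C). -/
def CondC (V' κ : ℝ → ℝ) (UM K₁ K : ℝ) : Prop :=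
  (K₁ < K ∧ K < V' UM) ∨ (CondH κ ∧ V' 0 < K ∧ K ≤ K₁)

/-- Periodic solution. -/
def IsPeriodicSol (u w : ℝ → ℝ) : Prop :=
  ∃ Z, 0 < Z ∧ ∀ z, u (z + Z) = u z ∧ w (z + Z) = w z

/-- Nonconstant pair of functions. -/
def Nonconst (u w : ℝ → ℝ) : Prop := ∃ z, u z ≠ u 0 ∨ w z ≠ w 0

/-- Discriminant of the Jacobian at an equilibrium `(u,0)`. -/
def discTV (V' κ : ℝ → ℝ) (τ K u μ : ℝ) : ℝ :=
  (g2TV κ τ u) ^ 2 * (hTV V' K μ u) ^ 2 + 4 * g1TV κ τ u * fdTV V' K u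

/-- The eigenvalue `λ₊(u)`. -/
def lamP (V' κ : ℝ → ℝ) (τ K u μ : ℝ) : ℝ :=
  (g2TV κ τ u * hTV V' K μ u + Real.sqrt (discTV V' κ τ K u μ)) / 2

/-- The eigenvalue `λ₋(u)`. -/
def lamM (V' κ : ℝ → ℝ) (τ K u μ : ℝ) : ℝ :=
  (g2TV κ τ u * hTV V' K μ u - Real.sqrt (discTV V' κ τ K u μ)) / 2

/-- `Z` is the minimal period of `(u,w)`. -/
def IsMinPeriod (u w : ℝ → ℝ) (Z : ℝ) : Prop :=
  0 < Z ∧ (∀ z, u (z + Z) = u z ∧ w (z + Z) = w z) ∧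
  ∀ Z', 0 < Z' → (∀ z, u (z + Z') = u z ∧ w (z + Z') = w z) → Z ≤ Z'

lemma A1.anti_mono {V V' V'' : ℝ → ℝ} {UM : ℝ} (h : A1 V V' V'' UM) :
    StrictMonoOn V' (Icc 0 UM) ∧ StrictAntiOn V' (Ici UM) := by
  obtain ⟨-, hc, hd, -, -, -, -, hU, hmax, hz⟩ := h
  constructor
  · have hcc : ContinuousOn V' (Icc 0 UM) := hc.mono fun x hx => hx.1
    rcases hasDerivWithinAt_forall_lt_or_forall_gt_of_forall_ne (convex_Ioo 0 UM)
      (fun x hx => (hd x hx.1).hasDerivWithinAt) (m := 0)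
      (fun x hx h0 => hx.2.ne ((hz x hx.1).1 h0)) with h1 | h1
    · have : StrictAntiOn V' (Icc 0 UM) := by
        apply strictAntiOn_of_deriv_neg (convex_Icc _ _) hcc
        intro x hx
        rw [interior_Icc] at hx
        rw [(hd x hx.1).deriv]
        exact h1 x hx
      have h2 := this (a := UM / 2) (b := UM) ⟨by linarith, by linarith⟩
        ⟨by linarith, le_rfl⟩ (by linarith)
      have h3 := hmax (UM / 2) (by linarith)
      linarith
    · apply strictMonoOn_of_deriv_pos (convex_Icc _ _) hcc
      intro x hx
      rw [interior_Icc] at hx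
      rw [(hd x hx.1).deriv]
      exact h1 x hx
  · have hcc : ContinuousOn V' (Ici UM) := hc.mono fun x hx => hU.le.trans hx
    rcases hasDerivWithinAt_forall_lt_or_forall_gt_of_forall_ne (convex_Ioi UM)
      (fun x hx => (hd x (hU.trans hx)).hasDerivWithinAt) (m := 0)
      (fun x hx h0 => (ne_of_gt hx) ((hz x (hU.trans hx)).1 h0)) with h1 | h1
    · apply strictAntiOn_of_deriv_neg (convex_Ici _) hcc
      intro x hx
      rw [interior_Ici] at hx
      rw [(hd x (hU.trans hx)).deriv]
      exact h1 x hx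
    · have : StrictMonoOn V' (Ici UM) := by
        apply strictMonoOn_of_deriv_pos (convex_Ici _) hcc
        intro x hx
        rw [interior_Ici] at hx
        rw [(hd x (hU.trans hx)).deriv]
        exact h1 x hx
      have h2 := this (a := UM) (b := UM + 1) (mem_Ici.2 le_rfl) (mem_Ici.2 (by linarith))
        (by linarith)
      have h3 := hmax (UM + 1) (by linarith)
      linarith

lemma A1.mvt {V V' V'' : ℝ → ℝ} {UM : ℝ} (h : A1 V V' V'' UM) {a b : ℝ} (ha : 0 ≤ a)
    (hab : a < b) : ∃ x ∈ Ioo a b, V b - V a = V' x * (b - a) := by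
  obtain ⟨hV, -⟩ := h
  obtain ⟨x, hx, hx'⟩ := exists_hasDerivAt_eq_slope V V' hab
    (fun x hx => ((hV x (ha.trans hx.1)).continuousWithinAt).mono
      (fun y hy => ha.trans hy.1))
    (fun x hx => (hV x (ha.trans hx.1.le)).hasDerivAt (Ici_mem_nhds (ha.trans_lt hx.1)))
  refine ⟨x, hx, ?_⟩
  rw [hx', div_mul_cancel₀]
  linarith

lemma A1.g_dec {V V' V'' : ℝ → ℝ} {UM : ℝ} (h : A1 V V' V'' UM) {K a b : ℝ} (ha : 0 ≤ a)
    (hab : a < b) (hKa : K ≤ V' a) (hKb : K ≤ V' b) :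
    K * b - V b < K * a - V a := by
  obtain ⟨x, hx, he⟩ := h.mvt ha hab
  obtain ⟨hm, hn⟩ := h.anti_mono
  have : K < V' x := by
    rcases le_total x UM with h1 | h1
    · exact hKa.trans_lt (hm ⟨ha, hx.1.le.trans h1⟩ ⟨ha.trans hx.1.le, h1⟩ hx.1)
    · exact hKb.trans_lt (hn h1 (h1.trans hx.2.le) hx.2)
  nlinarith

lemma A1.g_inc1 {V V' V'' : ℝ → ℝ} {UM : ℝ} (h : A1 V V' V'' UM) {K a b : ℝ} (ha : 0 ≤ a)
    (hab : a < b) (hb : b ≤ UM) (hKb : V' b ≤ K) :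
    K * a - V a < K * b - V b := by
  obtain ⟨x, hx, he⟩ := h.mvt ha hab
  obtain ⟨hm, hn⟩ := h.anti_mono
  have : V' x < K :=
    (hm ⟨ha.trans hx.1.le, hx.2.le.trans hb⟩ ⟨ha.trans hab.le, hb⟩ hx.2).trans_le hKb
  nlinarith

lemma A1.g_inc2 {V V' V'' : ℝ → ℝ} {UM : ℝ} (h : A1 V V' V'' UM) {K a b : ℝ} (ha : UM ≤ a)
    (hab : a < b) (hKa : V' a ≤ K) :
    K * a - V a < K * b - V b := by
  have hU : 0 < UM := h.2.2.2.2.2.2.2.1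
  obtain ⟨x, hx, he⟩ := h.mvt (hU.le.trans ha) hab
  obtain ⟨hm, hn⟩ := h.anti_mono
  have : V' x < K := (hn ha (ha.trans hx.1.le) hx.1).trans_le hKa
  nlinarith

/-- Implicit function theorem on a region. -/
lemma contDiffOn_of_region {V V' : ℝ → ℝ}
    (hV : ∀ u, 0 < u → HasDerivAt V (V' u) u) (hc : ContinuousOn V' (Ioi 0))
    (R S : Set (ℝ × ℝ)) (w : ℝ × ℝ → ℝ)
    (hR : ∀ p ∈ R, R ∈ nhds p) (hpos : ∀ p ∈ R, 0 < p.2) (hne : ∀ p ∈ R, p.1 ≠ V' p.2)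
    (huniq : ∀ K a b, (K, a) ∈ R → (K, b) ∈ R → K * a - V a = K * b - V b → a = b)
    (hw : ∀ p ∈ S, (p.1, w p) ∈ R ∧ p.1 * w p - V (w p) = p.2) :
    ContDiffOn ℝ 1 w S := by
  intro p hp
  obtain ⟨hpR, hpe⟩ := hw p hp
  have hu := hpos _ hpR
  have hn := hne _ hpR
  simp only at hu hn
  set u := w p with hudef
  have hVc : ContDiffAt ℝ 1 V u := by
    have : ContDiffOn ℝ 1 V (Ioi 0) := by
      rw [contDiffOn_one_iff_derivWithin (isOpen_Ioi.uniqueDiffOn)]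
      refine ⟨fun x hx => (hV x hx).differentiableAt.differentiableWithinAt, ?_⟩
      refine hc.congr fun x hx => ?_
      rw [derivWithin_of_isOpen isOpen_Ioi hx, (hV x hx).deriv]
    exact this.contDiffAt (Ioi_mem_nhds hu)
  let F : (ℝ × ℝ) × ℝ → ℝ := fun q => q.1.1 * q.2 - V q.2 - q.1.2
  have hF : ContDiffAt ℝ 1 F (p, u) := by
    have h2 : ContDiffAt ℝ 1 (fun q : (ℝ × ℝ) × ℝ => V q.2) (p, u) :=
      ContDiffAt.comp (p, u) (g := V) (f := Prod.snd) hVc contDiffAt_snd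
    exact ((contDiffAt_fst.fst.mul contDiffAt_snd).sub h2).sub contDiffAt_fst.snd
  have hinv : (fderiv ℝ F (p, u) ∘L .inr ℝ (ℝ × ℝ) ℝ).IsInvertible := by
    have hd : HasFDerivAt F (fderiv ℝ F (p, u)) (p, u) :=
      (hF.differentiableAt one_ne_zero).hasFDerivAt
    have h1 : HasDerivAt (fun x : ℝ => F (p, x))
        ((fderiv ℝ F (p, u) ∘L .inr ℝ (ℝ × ℝ) ℝ) 1) u := by
      have h3 : HasFDerivAt (fun x : ℝ => F (p, x))
        (fderiv ℝ F (p, u) ∘L .inr ℝ (ℝ × ℝ) ℝ) u :=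
        HasFDerivAt.comp (f := fun x : ℝ => (p, x)) (g := F) u hd
          (hasFDerivAt_prodMk_right p u)
      exact h3.hasDerivAt
    have h2 : HasDerivAt (fun x : ℝ => F (p, x)) (p.1 * 1 - V' u) u :=
      (((hasDerivAt_id u).const_mul p.1).sub (hV u hu)).sub_const p.2
    have h3 := h1.unique h2
    set L := fderiv ℝ F (p, u) ∘L .inr ℝ (ℝ × ℝ) ℝ
    have ha : p.1 - V' u ≠ 0 := sub_ne_zero.2 hn
    refine ⟨ContinuousLinearEquiv.unitsEquivAut ℝ (Units.mk0 _ ha), ?_⟩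
    ext
    simp [h3]
  have hφ := hF.contDiffAt_implicitFunction one_ne_zero hinv
  have hφ0 := hF.implicitFunction_apply_self one_ne_zero hinv
  have hφe := hF.eventually_apply_implicitFunction one_ne_zero hinv
  set φ := hF.implicitFunction one_ne_zero hinv
  simp only at hφ hφ0 hφe
  have hRe : ∀ᶠ q in nhds p, (q.1, φ q) ∈ R := by
    have hct : ContinuousAt (fun q : ℝ × ℝ => (q.1, φ q)) p :=
      continuousAt_fst.prodMk hφ.continuousAt
    apply hct
    simp only [hφ0]
    exact hR _ hpR
  refine hφ.contDiffWithinAt.congr_of_eventuallyEq ?_ hφ0.symm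
  filter_upwards [nhdsWithin_le_nhds hRe, nhdsWithin_le_nhds hφe, self_mem_nhdsWithin]
    with q h1 h2 h3
  obtain ⟨h4, h5⟩ := hw q h3
  refine huniq q.1 _ _ h4 h1 ?_
  have : F (p, u) = 0 := by simp only [F]; linarith
  rw [this] at h2
  simp only [F] at h2
  linarith

lemma fTV_zero {V : ℝ → ℝ} {K c u : ℝ} (hK : 0 < K) : fTV V K c u = 0 ↔ K * u - V u = c := by
  unfold fTV
  rw [div_eq_zero_iff]
  constructor
  · rintro (h | h) <;> linarith
  · intro h
    left
    linarith

theorem stmt11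
    (V V' V'' : ℝ → ℝ) (UM K₁ : ℝ) (uMx umx : ℝ → ℝ)
    (u1f u0f u2f : ℝ → ℝ → ℝ)
    (hA1 : A1 V V' V'' UM)
    (huMx : UMaxHyp V' UM uMx) (humx : UMinHyp V' UM umx)
    (hK1 : K1Hyp V V' UM umx K₁)
    (hzD1 : ∀ K c, (K, c) ∈ D1 V V' UM uMx umx →
      ZerosD1 V K c (u1f K c) (u0f K c) (u2f K c))
    (hzD2 : ∀ K c, (K, c) ∈ D2 V V' umx K₁ → ZerosD2 V K c (u0f K c) (u2f K c)) :
    ContDiffOn ℝ 1 (fun p : ℝ × ℝ => u1f p.1 p.2) (D1 V V' UM uMx umx) ∧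
    ContDiffOn ℝ 1 (fun p : ℝ × ℝ => u0f p.1 p.2)
      (D1 V V' UM uMx umx ∪ D2 V V' umx K₁) ∧
    ContDiffOn ℝ 1 (fun p : ℝ × ℝ => u2f p.1 p.2)
      (D1 V V' UM uMx umx ∪ D2 V V' umx K₁) ∧
    (∀ K, V' 0 < K → K < V' UM →
      Tendsto (fun cc => u0f K cc)
        (nhdsWithin (cMf V uMx K) (Iio (cMf V uMx K))) (nhds (uMx K)) ∧
      Tendsto (fun cc => u1f K cc)
        (nhdsWithin (cMf V uMx K) (Iio (cMf V uMx K))) (nhds (uMx K))) ∧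
    (∀ K, 0 < K → K < V' UM →
      Tendsto (fun cc => u0f K cc)
        (nhdsWithin (cmf V umx K) (Ioi (cmf V umx K))) (nhds (umx K)) ∧
      Tendsto (fun cc => u2f K cc)
        (nhdsWithin (cmf V umx K) (Ioi (cmf V umx K))) (nhds (umx K))) := by
  have hV' : ∀ u, 0 < u → HasDerivAt V (V' u) u := fun u hu =>
    (hA1.1 u hu.le).hasDerivAt (Ici_mem_nhds hu)
  have hcV' : ContinuousOn V' (Ioi 0) := hA1.2.1.mono Ioi_subset_Ici_self
  have hU : 0 < UM := hA1.2.2.2.2.2.2.2.1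
  obtain ⟨hm, hn⟩ := hA1.anti_mono
  obtain ⟨hK10, hK1M, hKlt, hKeq, hKgt⟩ := hK1
  have hV0 : 0 ≤ V' 0 := by
    have h1 : Tendsto V' (nhdsWithin 0 (Ioi 0)) (nhds (V' 0)) :=
      (hA1.2.1 0 (mem_Ici.2 le_rfl)).mono Ioi_subset_Ici_self
    refine ge_of_tendsto h1 ?_
    filter_upwards [self_mem_nhdsWithin] with x hx
    exact (hA1.2.2.2.2.1 x hx).le
  have hcMm : ∀ K, V' 0 < K → K < V' UM → c1f V umx K < cMf V uMx K := by
    intro K h0 h1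
    obtain ⟨⟨ha, hb⟩, hc⟩ := huMx K h0 h1
    obtain ⟨hd, he⟩ := humx K (hV0.trans_lt h0) h1
    refine max_lt ?_ ?_
    · have := hA1.g_inc1 le_rfl ha hb.le hc.le
      unfold c0v cMf
      linarith
    · exact hA1.g_dec ha.le (hb.trans hd) hc.ge he.ge
  have hD1c : ∀ K c, (K, c) ∈ D1 V V' UM uMx umx →
      0 < K ∧ K < V' UM ∧
      (0 < u1f K c ∧ u1f K c < UM ∧ V' (u1f K c) < K ∧ K * u1f K c - V (u1f K c) = c) ∧
      (0 < u0f K c ∧ K < V' (u0f K c) ∧ K * u0f K c - V (u0f K c) = c) ∧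
      (UM < u2f K c ∧ V' (u2f K c) < K ∧ K * u2f K c - V (u2f K c) = c) := by
    intro K c hp
    obtain ⟨p1, h10, h02, z1, z0, z2, -⟩ := hzD1 K c hp
    obtain ⟨hk0, hkM, hc1, hcM⟩ := hp
    simp only at hk0 hkM hc1 hcM
    have hk : 0 < K := hV0.trans_lt hk0
    rw [fTV_zero hk] at z1 z0 z2
    obtain ⟨⟨ha, hb⟩, hc⟩ := huMx K hk0 hkM
    obtain ⟨hd, he⟩ := humx K hk hkM
    have hcm : cmf V umx K < c := (le_max_right _ _).trans_lt hc1
    have cls : ∀ u, 0 < u → K * u - V u = c →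
        (u < UM ∧ V' u < K) ∨ (K < V' u) ∨ (UM < u ∧ V' u < K) := by
      intro u hu hz
      rcases lt_trichotomy (V' u) K with h | h | h
      · rcases lt_trichotomy u UM with h' | h' | h'
        · exact Or.inl ⟨h', h⟩
        · subst h'; linarith
        · exact Or.inr (Or.inr ⟨h', h⟩)
      · exfalso
        rcases le_total u UM with h' | h'
        · have : u = uMx K := hm.injOn ⟨hu.le, h'⟩ ⟨ha.le, hb.le⟩ (h.trans hc.symm)
          subst this
          unfold cMf at hcM
          linarith
        · have : u = umx K := hn.injOn h' hd.le (h.trans he.symm)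
          subst this
          unfold cmf at hcm
          linarith
      · exact Or.inr (Or.inl h)
    have e11 : ∀ u v, 0 < u → u < v → v < UM → V' v < K → K * u - V u = c →
        K * v - V v = c → False := fun u v hu huv hv hvK h1 h2 => by
      have := hA1.g_inc1 hu.le huv hv.le hvK.le
      linarith
    have e00 : ∀ u v, 0 < u → u < v → K < V' u → K < V' v → K * u - V u = c →
        K * v - V v = c → False := fun u v hu huv hv hvK h1 h2 => by
      have := hA1.g_dec hu.le huv hv.le hvK.le
      linarith
    have e22 : ∀ u v, UM < u → u < v → V' u < K → K * u - V u = c →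
        K * v - V v = c → False := fun u v hu huv hv h1 h2 => by
      have := hA1.g_inc2 hu.le huv hv.le
      linarith
    have o01 : ∀ u v, 0 < u → u < v → K < V' u → v < UM → V' v < K → False := by
      intro u v hu huv h1 h2 h3
      have := hm ⟨hu.le, (huv.trans h2).le⟩ ⟨(hu.trans huv).le, h2.le⟩ huv
      linarith
    have o20 : ∀ u v, u < v → UM < u → V' u < K → K < V' v → False := by
      intro u v huv h1 h2 h3
      have := hn h1.le (h1.trans huv).le huv
      linarith
    have p0 := p1.trans h10
    have p2 := p0.trans h02
    have c1 := cls _ p1 z1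
    have c0 := cls _ p0 z0
    have c2 := cls _ p2 z2
    have a1 := e11 _ _ p1 h10
    have a2 := e11 _ _ p0 h02
    have a4 := e00 _ _ p1 h10
    have a5 := e00 _ _ p0 h02
    have a7 := e22 (u1f K c) (u0f K c)
    have a8 := e22 (u0f K c) (u2f K c)
    have b1 := o01 _ _ p1 h10
    have b2 := o01 _ _ p0 h02
    have b4 := o20 _ _ h10
    have b5 := o20 _ _ h02
    have g1 : u1f K c < UM ∧ V' (u1f K c) < K := by
      rcases c1 with h | h | ⟨h, h'⟩
      · exact h
      · exfalso
        rcases c0 with ⟨k, k'⟩ | k | ⟨k, k'⟩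
        · exact b1 h k k'
        · exact a4 h k z1 z0
        · rcases c2 with ⟨l, l'⟩ | l | ⟨l, l'⟩
          · linarith
          · exact b5 k k' l
          · exact a8 k h02 k' z0 z2
      · exfalso; exact a7 h h10 h' z1 z0
    have g0 : K < V' (u0f K c) := by
      rcases c0 with ⟨k, k'⟩ | k | ⟨k, k'⟩
      · exact (a1 k k' z1 z0).elim
      · exact k
      · exact (a8 k h02 k' z0 z2).elim
    have g2 : UM < u2f K c ∧ V' (u2f K c) < K := by
      rcases c2 with ⟨k, k'⟩ | k | h
      · exact (b2 g0 k k').elim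
      · exact (a5 g0 k z0 z2).elim
      · exact h
    exact ⟨hk, hkM, ⟨p1, g1.1, g1.2, z1⟩, ⟨p0, g0, z0⟩, ⟨g2.1, g2.2, z2⟩⟩
  have hD2c : ∀ K c, (K, c) ∈ D2 V V' umx K₁ →
      0 < K ∧ K < V' UM ∧
      (0 < u0f K c ∧ K < V' (u0f K c) ∧ K * u0f K c - V (u0f K c) = c) ∧
      (UM < u2f K c ∧ V' (u2f K c) < K ∧ K * u2f K c - V (u2f K c) = c) := by
    intro K c hp
    obtain ⟨p0, h02, z0, z2, -⟩ := hzD2 K c hp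
    have hk : 0 < K ∧ K < K₁ ∧ cmf V umx K < c ∧ c ≤ c0v V := by
      rcases hp with ⟨h1, h2, h3⟩ | ⟨h1, h2, h3, h4⟩
      · simp only at h1 h2 h3
        have h0 := hV0.trans_lt h1
        exact ⟨h0, h2, h3 ▸ hKlt K h0 h2, h3.le⟩
      · exact ⟨h1, h2, h3, h4.le⟩
    obtain ⟨hk, hk1, hcm, hc0⟩ := hk
    have hkM := hk1.trans hK1M
    rw [fTV_zero hk] at z0 z2
    obtain ⟨hd, he⟩ := humx K hk hkM
    have cls : ∀ u, 0 < u → K * u - V u = c → (K < V' u) ∨ (UM < u ∧ V' u < K) := by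
      intro u hu hz
      rcases lt_or_ge K (V' u) with h | h
      · exact Or.inl h
      · rcases le_or_gt u UM with h' | h'
        · exfalso
          have := hA1.g_inc1 le_rfl hu h' h
          unfold c0v at hc0
          linarith
        · rcases h.lt_or_eq with h | h
          · exact Or.inr ⟨h', h⟩
          · exfalso
            have : u = umx K := hn.injOn h'.le hd.le (h.trans he.symm)
            subst this
            unfold cmf at hcm
            linarith
    have g0 : K < V' (u0f K c) := by
      rcases cls _ p0 z0 with h | ⟨h, h'⟩
      · exact h
      · have := hA1.g_inc2 h.le h02 h'.le
        linarith
    have g2 : UM < u2f K c ∧ V' (u2f K c) < K := by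
      rcases cls _ (p0.trans h02) z2 with h | h
      · have := hA1.g_dec p0.le h02 g0.le h.le
        linarith
      · exact h
    exact ⟨hk, hkM, ⟨p0, g0, z0⟩, ⟨g2.1, g2.2, z2⟩⟩
  have hDc : ∀ K c, (K, c) ∈ D1 V V' UM uMx umx ∪ D2 V V' umx K₁ →
      0 < K ∧ K < V' UM ∧
      (0 < u0f K c ∧ K < V' (u0f K c) ∧ K * u0f K c - V (u0f K c) = c) ∧
      (UM < u2f K c ∧ V' (u2f K c) < K ∧ K * u2f K c - V (u2f K c) = c) := by
    rintro K c (h | h)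
    · obtain ⟨h1, h2, -, h3⟩ := hD1c K c h
      exact ⟨h1, h2, h3⟩
    · exact hD2c K c h
  have hcont : ∀ p : ℝ × ℝ, 0 < p.2 → ContinuousAt (fun q : ℝ × ℝ => V' q.2) p := by
    intro p hp
    have h1 : ContinuousAt V' p.2 := hcV'.continuousAt (Ioi_mem_nhds hp)
    exact ContinuousAt.comp (g := V') (f := Prod.snd) h1 continuousAt_snd
  refine ⟨?_, ?_, ?_, ?_, ?_⟩
  · refine contDiffOn_of_region hV' hcV' {p | 0 < p.2 ∧ p.2 < UM ∧ V' p.2 < p.1} _ _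
      ?_ (fun p hp => hp.1) (fun p hp => hp.2.2.ne') ?_ ?_
    · rintro p ⟨h1, h2, h3⟩
      filter_upwards [continuousAt_snd.eventually_lt continuousAt_const h2,
        continuousAt_const.eventually_lt continuousAt_snd h1,
        (hcont p h1).eventually_lt continuousAt_fst h3] with q a b c
      exact ⟨b, a, c⟩
    · rintro K a b ⟨a1, a2, a3⟩ ⟨b1, b2, b3⟩ hab
      simp only at a1 a2 a3 b1 b2 b3
      rcases lt_trichotomy a b with h | h | h
      · have := hA1.g_inc1 a1.le h b2.le b3.le
        linarith
      · exact h
      · have := hA1.g_inc1 b1.le h a2.le a3.le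
        linarith
    · rintro ⟨K, c⟩ hp
      obtain ⟨-, -, ⟨h1, h2, h3, h4⟩, -⟩ := hD1c K c hp
      exact ⟨⟨h1, h2, h3⟩, h4⟩
  · refine contDiffOn_of_region hV' hcV' {p | 0 < p.2 ∧ p.1 < V' p.2} _ _
      ?_ (fun p hp => hp.1) (fun p hp => hp.2.ne) ?_ ?_
    · rintro p ⟨h1, h3⟩
      filter_upwards [continuousAt_const.eventually_lt continuousAt_snd h1,
        continuousAt_fst.eventually_lt (hcont p h1) h3] with q b c
      exact ⟨b, c⟩
    · rintro K a b ⟨a1, a3⟩ ⟨b1, b3⟩ hab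
      simp only at a1 a3 b1 b3
      rcases lt_trichotomy a b with h | h | h
      · have := hA1.g_dec a1.le h a3.le b3.le
        linarith
      · exact h
      · have := hA1.g_dec b1.le h b3.le a3.le
        linarith
    · rintro ⟨K, c⟩ hp
      obtain ⟨-, -, ⟨h1, h3, h4⟩, -⟩ := hDc K c hp
      exact ⟨⟨h1, h3⟩, h4⟩
  · refine contDiffOn_of_region hV' hcV' {p | UM < p.2 ∧ V' p.2 < p.1} _ _
      ?_ (fun p hp => hU.trans hp.1) (fun p hp => hp.2.ne') ?_ ?_
    · rintro p ⟨h1, h3⟩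
      filter_upwards [continuousAt_const.eventually_lt continuousAt_snd h1,
        (hcont p (hU.trans h1)).eventually_lt continuousAt_fst h3] with q b c
      exact ⟨b, c⟩
    · rintro K a b ⟨a1, a3⟩ ⟨b1, b3⟩ hab
      simp only at a1 a3 b1 b3
      rcases lt_trichotomy a b with h | h | h
      · have := hA1.g_inc2 a1.le h a3.le
        linarith
      · exact h
      · have := hA1.g_inc2 b1.le h b3.le
        linarith
    · rintro ⟨K, c⟩ hp
      obtain ⟨-, -, -, ⟨h1, h3, h4⟩⟩ := hDc K c hp
      exact ⟨⟨h1, h3⟩, h4⟩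
  · intro K hk0 hkM
    obtain ⟨⟨ha, hb⟩, hc⟩ := huMx K hk0 hkM
    have hev : ∀ᶠ c in nhdsWithin (cMf V uMx K) (Iio (cMf V uMx K)),
        (K, c) ∈ D1 V V' UM uMx umx := by
      filter_upwards [self_mem_nhdsWithin,
        nhdsWithin_le_nhds (Ioi_mem_nhds (hcMm K hk0 hkM))] with c h1 h2
      exact ⟨hk0, hkM, h2, h1⟩
    constructor
    · rw [tendsto_order]
      constructor
      · intro a haa
        filter_upwards [hev] with c hD
        obtain ⟨-, -, -, ⟨h1, h2, h3⟩, -⟩ := hD1c K c hD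
        refine haa.trans (lt_of_not_ge fun hle => ?_)
        have := hm.monotoneOn ⟨h1.le, hle.trans hb.le⟩ ⟨ha.le, hb.le⟩ hle
        linarith
      · intro b' hbb
        obtain ⟨b, hb1, hb2⟩ := exists_between (lt_min hbb hb)
        have hb3 := hb2.trans_le (min_le_left _ _)
        have hb4 := hb2.trans_le (min_le_right _ _)
        have hKb : K < V' b := hc ▸ hm ⟨ha.le, hb.le⟩ ⟨(ha.trans hb1).le, hb4.le⟩ hb1
        have hg : K * b - V b < cMf V uMx K := hA1.g_dec ha.le hb1 hc.ge hKb.le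
        filter_upwards [hev, nhdsWithin_le_nhds (Ioi_mem_nhds hg)] with c hD hcb
        obtain ⟨-, -, -, ⟨h1, h2, h3⟩, -⟩ := hD1c K c hD
        refine lt_trans (lt_of_not_ge fun hle => ?_) hb3
        rw [mem_Ioi] at hcb
        rcases hle.lt_or_eq with hlt | heq
        · have := hA1.g_dec (ha.trans hb1).le hlt hKb.le h2.le
          linarith
        · rw [← heq] at h3
          linarith
    · rw [tendsto_order]
      constructor
      · intro a' haa
        obtain ⟨a, ha1, ha2⟩ := exists_between (max_lt haa ha)
        have ha3 := (le_max_left _ _).trans_lt ha1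
        have ha4 := (le_max_right _ _).trans_lt ha1
        have hg : K * a - V a < cMf V uMx K := hA1.g_inc1 ha4.le ha2 hb.le hc.le
        have hKa : V' a < K := hc ▸ hm ⟨ha4.le, (ha2.trans hb).le⟩ ⟨ha.le, hb.le⟩ ha2
        filter_upwards [hev, nhdsWithin_le_nhds (Ioi_mem_nhds hg)] with c hD hcb
        obtain ⟨-, -, ⟨h1, h2, h3, h4⟩, -⟩ := hD1c K c hD
        refine ha3.trans (lt_of_not_ge fun hle => ?_)
        rw [mem_Ioi] at hcb
        rcases hle.lt_or_eq with hlt | heq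
        · have := hA1.g_inc1 h1.le hlt (ha2.trans hb).le hKa.le
          linarith
        · rw [heq] at h4
          linarith
      · intro b hbb
        filter_upwards [hev] with c hD
        obtain ⟨-, -, ⟨h1, h2, h3, h4⟩, -⟩ := hD1c K c hD
        refine lt_trans (lt_of_not_ge fun hle => ?_) hbb
        have := hm.monotoneOn ⟨ha.le, hb.le⟩ ⟨h1.le, h2.le⟩ hle
        linarith
  · intro K hk hkM
    obtain ⟨hd, he⟩ := humx K hk hkM
    have hd0 := hU.trans hd
    have hev : ∀ᶠ c in nhdsWithin (cmf V umx K) (Ioi (cmf V umx K)),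
        (K, c) ∈ D1 V V' UM uMx umx ∪ D2 V V' umx K₁ := by
      rcases lt_or_ge K K₁ with h | h
      · filter_upwards [self_mem_nhdsWithin,
          nhdsWithin_le_nhds (Iio_mem_nhds (hKlt K hk h))] with c h1 h2
        exact Or.inr (Or.inr ⟨hk, h, h1, h2⟩)
      · have hk0 := hK10.trans_le h
        have h5 : c0v V ≤ cmf V umx K := by
          rcases h.lt_or_eq with h | h
          · exact (hKgt K h hkM).le
          · rw [← h, hKeq]
        have h6 : cmf V umx K < cMf V uMx K := (le_max_right _ _).trans_lt (hcMm K hk0 hkM)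
        filter_upwards [self_mem_nhdsWithin,
          nhdsWithin_le_nhds (Iio_mem_nhds h6)] with c h1 h2
        exact Or.inl ⟨hk0, hkM, max_lt (h5.trans_lt h1) h1, h2⟩
    constructor
    · rw [tendsto_order]
      constructor
      · intro a' haa
        obtain ⟨a, ha1, ha2⟩ := exists_between (max_lt haa hd)
        have ha3 := (le_max_left _ _).trans_lt ha1
        have ha4 := (le_max_right _ _).trans_lt ha1
        have hKa : K < V' a := he ▸ hn ha4.le hd.le ha2
        have hg : cmf V umx K < K * a - V a :=
          hA1.g_dec (hU.trans ha4).le ha2 hKa.le he.ge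
        filter_upwards [hev, nhdsWithin_le_nhds (Iio_mem_nhds hg)] with c hD hcb
        obtain ⟨-, -, ⟨h1, h2, h3⟩, -⟩ := hDc K c hD
        refine ha3.trans (lt_of_not_ge fun hle => ?_)
        rw [mem_Iio] at hcb
        rcases hle.lt_or_eq with hlt | heq
        · have := hA1.g_dec h1.le hlt h2.le hKa.le
          linarith
        · rw [heq] at h3
          linarith
      · intro b hbb
        filter_upwards [hev] with c hD
        obtain ⟨-, -, ⟨h1, h2, h3⟩, -⟩ := hDc K c hD
        refine lt_trans (lt_of_not_ge fun hle => ?_) hbb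
        have := hn.antitoneOn hd.le (hd.le.trans hle) hle
        linarith
    · rw [tendsto_order]
      constructor
      · intro a haa
        filter_upwards [hev] with c hD
        obtain ⟨-, -, -, ⟨h1, h2, h3⟩⟩ := hDc K c hD
        refine haa.trans (lt_of_not_ge fun hle => ?_)
        have := hn.antitoneOn h1.le hd.le hle
        linarith
      · intro b hbb
        have hg : cmf V umx K < K * b - V b := hA1.g_inc2 hd.le hbb he.le
        have hKb : V' b < K := he ▸ hn hd.le (hd.trans hbb).le hbb
        filter_upwards [hev, nhdsWithin_le_nhds (Iio_mem_nhds hg)] with c hD hcb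
        obtain ⟨-, -, -, ⟨h1, h2, h3⟩⟩ := hDc K c hD
        refine lt_of_not_ge fun hle => ?_
        rw [mem_Iio] at hcb
        rcases hle.lt_or_eq with hlt | heq
        · have := hA1.g_inc2 (hd.trans hbb).le hlt hKb.le
          linarith
        · rw [← heq] at h3
          linarith

end TrafficTW
end
end

section
/- Let (K,c) ∈ D₁ ∪ D₂ and let (u,w) be a solution of (TV) with u > 0 satisfying condition (HO) with level ū = u₁ or ū = u₂ for some μ ∈ ℝ. Set m̲ = inf_{z∈ℝ} u(z) and m̄ = sup_{z∈ℝ} u(z). Then −sup_{u∈(m̲,m̄)} f'(u) < μ < −inf_{u∈(m̲,m̄)} f'(u); equivalently, the function u ↦ h(u,μ) = f'(u) + μ takes both positive and negative values on (m̲,m̄). -/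
open Set Filter MeasureTheory

noncomputable section

namespace TrafficTW

lemma bdd_of_lim (u : ℝ → ℝ) (ub : ℝ) (hc : Continuous u)
    (h1 : Tendsto u atBot (nhds ub)) (h2 : Tendsto u atTop (nhds ub)) :
    BddAbove (range u) := by
  obtain ⟨a, ha⟩ := eventually_atBot.1 (h1.eventually (gt_mem_nhds (lt_add_one ub)))
  obtain ⟨b, hb⟩ := eventually_atTop.1 (h2.eventually (gt_mem_nhds (lt_add_one ub)))
  obtain ⟨C, hC⟩ := (isCompact_Icc (a := a) (b := b)).bddAbove_image hc.continuousOn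
  refine ⟨max C (ub + 1), ?_⟩
  rintro _ ⟨z, rfl⟩
  rcases le_total z a with h | h
  · exact le_max_of_le_right (ha z h).le
  rcases le_total b z with h' | h'
  · exact le_max_of_le_right (hb z h').le
  · exact le_max_of_le_left (hC ⟨z, ⟨h, h'⟩, rfl⟩)

lemma key (V V' V'' κ : ℝ → ℝ) (τ UM K c : ℝ)
    (hA1 : A1 V V' V'' UM) (hA2 : A2 κ) (hτ : 0 < τ) (hK : K ≠ 0)
    (ub μ : ℝ) (u w : ℝ → ℝ) (hub : 0 < ub)
    (hsol : IsTVSol V V' κ τ K c μ u w) (hpos : ∀ z, 0 < u z) (hHO : HO ub u w)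
    (s : ℝ) (hs : s ≠ 0)
    (hh : ∀ x ∈ Ioo (sInf (range u)) (sSup (range u)), 0 ≤ s * hTV V' K μ x) : False := by
  obtain ⟨hV, hV'c, hV'', -, -, -, -, hUM, -, hz⟩ := hA1
  obtain ⟨hκ, hκp⟩ := hA2
  obtain ⟨hu, hw⟩ := hsol
  obtain ⟨hb1, hb2, hw1, hw2, hnc⟩ := hHO
  have huc : Continuous u := continuous_iff_continuousAt.2 fun z => (hu z).continuousAt
  have hwc : Continuous w := continuous_iff_continuousAt.2 fun z => (hw z).continuousAt
  have hba := bdd_of_lim u ub huc hb1 hb2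
  have hbb : BddBelow (range u) := ⟨0, by rintro _ ⟨z, rfl⟩; exact (hpos z).le⟩
  have hle : ∀ z, u z ≤ sSup (range u) := fun z => le_csSup hba ⟨z, rfl⟩
  have hge : ∀ z, sInf (range u) ≤ u z := fun z => csInf_le hbb ⟨z, rfl⟩
  -- some point with `w ≠ 0`
  obtain ⟨z0, hz0⟩ : ∃ z, w z ≠ 0 := by
    by_contra! hcon
    apply hnc
    have hconst : ∀ x y, u x = u y :=
      is_const_of_deriv_eq_zero (fun z => (hu z).differentiableAt)
        (fun z => by rw [(hu z).deriv, hcon z])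
    intro z
    refine ⟨?_, hcon z⟩
    have : Tendsto u atTop (nhds (u z)) := by
      have : u = fun _ => u z := funext fun x => hconst x z
      rw [this]; exact tendsto_const_nhds
    exact tendsto_nhds_unique this hb2
  have hlt : sInf (range u) < sSup (range u) := by
    by_contra hcon
    have hconst : u = fun _ => u z0 := by
      funext x
      have h1 := hle x
      have h2 := hge x
      have h3 := hle z0
      have h4 := hge z0
      push Not at hcon
      linarith
    have h1 := hu z0
    rw [hconst] at h1
    exact hz0 (h1.unique (hasDerivAt_const _ _))
  have hhd : ∀ x, 0 < x → HasDerivAt (hTV V' K μ) (-(V'' x) / K) x := by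
    intro x hx
    have := (((hV'' x hx).const_sub K).div_const K).add_const μ
    exact this
  have hhu : ∀ z, 0 ≤ s * hTV V' K μ (u z) := by
    intro z
    have hmem : u z ∈ closure (Ioo (sInf (range u)) (sSup (range u))) := by
      rw [closure_Ioo hlt.ne]; exact ⟨hge z, hle z⟩
    haveI := mem_closure_iff_nhdsWithin_neBot.1 hmem
    have hc : Tendsto (fun x => s * hTV V' K μ x)
        (nhdsWithin (u z) (Ioo (sInf (range u)) (sSup (range u))))
        (nhds (s * hTV V' K μ (u z))) :=
      (((hhd (u z) (hpos z)).continuousAt.const_mul s).tendsto).mono_left nhdsWithin_le_nhds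
    exact ge_of_tendsto hc (eventually_mem_nhdsWithin.mono hh)
  -- the potential
  have hκc : ∀ x, 0 < x → ContinuousAt (fun x => κ (1 / x)) x := by
    intro x hx
    have h1 : ContinuousAt κ (1 / x) :=
      hκ.continuousOn.continuousAt (Ioi_mem_nhds (by positivity))
    have h2 : ContinuousAt (fun x : ℝ => 1 / x) x :=
      continuousAt_const.div continuousAt_id hx.ne'
    exact ContinuousAt.comp (f := fun x : ℝ => 1 / x) h1 h2
  have hg : ∀ x, 0 < x → ContinuousAt (fun x => g1TV κ τ x * fTV V K c x) x := by
    intro x hx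
    have hVc : ContinuousAt V x := (hV x hx.le).continuousWithinAt.continuousAt (Ici_mem_nhds hx)
    have hκx := hκp (1 / x) (by positivity)
    unfold g1TV fTV
    refine ContinuousAt.mul (continuousAt_const.div (continuousAt_const.mul (hκc x hx)) ?_) ?_
    · positivity
    · exact (((continuousAt_const.mul continuousAt_id).sub hVc).sub continuousAt_const).div_const K
  have hgon : ContinuousOn (fun x => g1TV κ τ x * fTV V K c x) (Ioi 0) :=
    fun x hx => (hg x hx).continuousWithinAt
  obtain ⟨G, hG⟩ : ∃ G : ℝ → ℝ, ∀ x, 0 < x → HasDerivAt G (g1TV κ τ x * fTV V K c x) x := by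
    refine ⟨fun x => ∫ t in ub..x, g1TV κ τ t * fTV V K c t, fun x hx => ?_⟩
    refine intervalIntegral.integral_hasDerivAt_right ?_ ?_ (hg x hx)
    · apply ContinuousOn.intervalIntegrable
      refine hgon.mono fun t ht => ?_
      exact lt_of_lt_of_le (lt_min hub hx) ht.1
    · exact hgon.stronglyMeasurableAtFilter isOpen_Ioi x hx
  let F : ℝ → ℝ := fun z => s * (w z ^ 2 / 2 - G (u z))
  have hF : ∀ z, HasDerivAt F (s * (g2TV κ τ (u z) * hTV V' K μ (u z) * w z ^ 2)) z := by
    intro z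
    have h1 := (((hw z).pow 2).div_const 2).sub ((hG (u z) (hpos z)).comp z (hu z))
    have h2 := h1.const_mul s
    refine h2.congr_deriv ?_
    push_cast
    ring
  have hg2 : ∀ z, 0 < g2TV κ τ (u z) := by
    intro z
    have := hpos z
    have hκx := hκp (1 / u z) (by positivity)
    unfold g2TV
    positivity
  have hmono : Monotone F := by
    apply monotone_of_deriv_nonneg (fun z => (hF z).differentiableAt)
    intro z
    rw [(hF z).deriv]
    have := mul_nonneg (mul_nonneg (hg2 z).le (hhu z)) (sq_nonneg (w z))
    linarith
  have hlim : ∀ l : Filter ℝ, Tendsto u l (nhds ub) → Tendsto w l (nhds 0) →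
      Tendsto F l (nhds (s * ((0:ℝ) ^ 2 / 2 - G ub))) := by
    intro l h1 h2
    exact (((h2.pow 2).div_const 2).sub
      ((hG ub hub).continuousAt.tendsto.comp h1)).const_mul s
  have hFc : F = fun _ => s * ((0:ℝ) ^ 2 / 2 - G ub) := by
    funext z
    exact le_antisymm (hmono.ge_of_tendsto (hlim _ hb2 hw2) z)
      (hmono.le_of_tendsto (hlim _ hb1 hw1) z)
  have hzero : ∀ z, w z ≠ 0 → hTV V' K μ (u z) = 0 := by
    intro z hwz
    have h1 := hF z
    rw [hFc] at h1
    have h2 := h1.unique (hasDerivAt_const _ _)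
    have := (hg2 z).ne'
    simp_all
  -- differentiate `h ∘ u = 0` near points with `w ≠ 0`
  have hUMeq : ∀ z, w z ≠ 0 → u z = UM := by
    intro z hwz
    have hev : (fun y => hTV V' K μ (u y)) =ᶠ[nhds z] fun _ => (0:ℝ) :=
      (hwc.continuousAt.eventually_ne hwz).mono fun y hy => hzero y hy
    have h1 : HasDerivAt (fun y => hTV V' K μ (u y)) (-(V'' (u z)) / K * w z) z :=
      (hhd (u z) (hpos z)).comp z (hu z)
    have h2 := (h1.congr_of_eventuallyEq hev.symm).unique (hasDerivAt_const z (0:ℝ))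
    have h3 : V'' (u z) = 0 := by
      field_simp at h2
      simpa [hwz] using h2
    exact (hz (u z) (hpos z)).1 h3
  have hev : (fun _ => UM) =ᶠ[nhds z0] u :=
    (hwc.continuousAt.eventually_ne hz0).mono fun y hy => (hUMeq y hy).symm
  exact hz0 (((hu z0).congr_of_eventuallyEq hev).unique (hasDerivAt_const z0 UM))

theorem stmt16
    (V V' V'' κ : ℝ → ℝ) (τ UM K c K₁ : ℝ) (uMx umx : ℝ → ℝ)
    (hA1 : A1 V V' V'' UM) (hA2 : A2 κ) (hτ : 0 < τ) (hK : K ≠ 0)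
    (huMx : UMaxHyp V' UM uMx) (humx : UMinHyp V' UM umx)
    (hK1 : K1Hyp V V' UM umx K₁)
    (ub μ : ℝ) (u w : ℝ → ℝ)
    (hub : ((K, c) ∈ D1 V V' UM uMx umx ∧
        ∃ u1 u0 u2, ZerosD1 V K c u1 u0 u2 ∧ (ub = u1 ∨ ub = u2)) ∨
      ((K, c) ∈ D2 V V' umx K₁ ∧ ∃ u0 u2, ZerosD2 V K c u0 u2 ∧ ub = u2))
    (hsol : IsTVSol V V' κ τ K c μ u w) (hpos : ∀ z, 0 < u z) (hHO : HO ub u w) :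
    (- sSup (fdTV V' K '' Ioo (sInf (range u)) (sSup (range u))) < μ ∧
      μ < - sInf (fdTV V' K '' Ioo (sInf (range u)) (sSup (range u)))) ∧
    (∃ a ∈ Ioo (sInf (range u)) (sSup (range u)), hTV V' K μ a < 0) ∧
    (∃ b ∈ Ioo (sInf (range u)) (sSup (range u)), 0 < hTV V' K μ b) := by
  have hub0 : 0 < ub := by
    rcases hub with ⟨-, u1, u0, u2, hz, h⟩ | ⟨-, u0, u2, hz, h⟩
    · obtain ⟨h1, h2, h3, -⟩ := hz
      rcases h with h | h <;> linarith
    · obtain ⟨h1, h2, -⟩ := hz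
      linarith
  obtain ⟨a, ha, hna⟩ :
      ∃ a ∈ Ioo (sInf (range u)) (sSup (range u)), hTV V' K μ a < 0 := by
    by_contra! hcon
    exact key V V' V'' κ τ UM K c hA1 hA2 hτ hK ub μ u w hub0 hsol hpos hHO 1 one_ne_zero
      (fun x hx => by rw [one_mul]; exact hcon x hx)
  obtain ⟨b, hb, hpb⟩ :
      ∃ b ∈ Ioo (sInf (range u)) (sSup (range u)), 0 < hTV V' K μ b := by
    by_contra! hcon
    exact key V V' V'' κ τ UM K c hA1 hA2 hτ hK ub μ u w hub0 hsol hpos hHO (-1) (by norm_num)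
      (fun x hx => by have := hcon x hx; linarith)
  have hinf : 0 ≤ sInf (range u) := by
    apply Real.sInf_nonneg
    rintro _ ⟨z, rfl⟩
    exact (hpos z).le
  have hcomp : IsCompact (fdTV V' K '' Icc (sInf (range u)) (sSup (range u))) := by
    apply isCompact_Icc.image_of_continuousOn
    have : ContinuousOn V' (Icc (sInf (range u)) (sSup (range u))) :=
      hA1.2.1.mono fun x hx => le_trans hinf hx.1
    exact (continuousOn_const.sub this).div_const K
  have hsub := image_mono (f := fdTV V' K)
    (Ioo_subset_Icc_self (a := sInf (range u)) (b := sSup (range u)))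
  have hB := le_csSup (hcomp.bddAbove.mono hsub) (mem_image_of_mem (fdTV V' K) hb)
  have hA := csInf_le (hcomp.bddBelow.mono hsub) (mem_image_of_mem (fdTV V' K) ha)
  refine ⟨⟨?_, ?_⟩, ⟨a, ha, hna⟩, ⟨b, hb, hpb⟩⟩
  · unfold hTV at hpb; linarith
  · unfold hTV at hna; linarith


end TrafficTW
end
end

section
/- Assume condition (C) and fix K ∈ (K₀,K_M). Then: (1) for every ε > 0 there is δ > 0 such that whenever c ∈ (c_M(K) − δ, c_M(K)) with (K,c) ∈ D₁ and (u,w) is a solution of (TV) with parameter μ satisfying (HO) with level ū = u₁(K,c), one has |μ| < ε and sup_{z∈ℝ} |(u(z),w(z)) − (u_M(K),0)| < ε; (2) for every ε > 0 there is δ > 0 such that whenever c ∈ (c_m(K), c_m(K) + δ) with (K,c) ∈ D₁ ∪ D₂ and (u,w) is a solution of (TV) with parameter μ satisfying (HO) with level ū = u₂(K,c), one has |μ| < ε and sup_{z∈ℝ} |(u(z),w(z)) − (u_m(K),0)| < ε. Equivalently, μ¹_pul(K,c) → 0 and the homoclinic orbit at u₁ converges in Hausdorff distance to the single point {(u_M(K),0)}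 as c → c_M(K), and μ²_pul(K,c) → 0 and the homoclinic orbit at u₂ converges in Hausdorff distance to {(u_m(K),0)} as c → c_m(K). -/
open Set Filter MeasureTheory

noncomputable section

namespace TrafficTW

theorem last_time {g : ℝ → ℝ} (hg : Continuous g) {t0 z v : ℝ} (h0 : t0 ≤ z) (h1 : g t0 ≤ v)
    (h2 : v < g z) : ∃ s, t0 ≤ s ∧ s < z ∧ g s = v ∧ ∀ t, s < t → t ≤ z → v < g t := by
  have hcl : IsClosed {t | t ∈ Icc t0 z ∧ g t ≤ v} :=
    isClosed_Icc.inter (isClosed_le hg continuous_const)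
  have hne : ({t | t ∈ Icc t0 z ∧ g t ≤ v}).Nonempty := ⟨t0, ⟨le_rfl, h0⟩, h1⟩
  have hbd : BddAbove {t | t ∈ Icc t0 z ∧ g t ≤ v} := ⟨z, fun t ht => ht.1.2⟩
  have hs := hcl.csSup_mem hne hbd
  set s := sSup {t | t ∈ Icc t0 z ∧ g t ≤ v} with hsdef
  have hafter : ∀ t, s < t → t ≤ z → v < g t := by
    intro t hst htz
    by_contra hcon
    push Not at hcon
    have : t ≤ s := le_csSup hbd ⟨⟨hs.1.1.trans hst.le, htz⟩, hcon⟩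
    linarith
  have hsz : s < z := by
    rcases lt_or_eq_of_le hs.1.2 with h | h
    · exact h
    · have := hs.2
      rw [h] at this
      linarith
  refine ⟨s, hs.1.1, hsz, ?_, hafter⟩
  apply le_antisymm hs.2
  by_contra hcon
  push Not at hcon
  obtain ⟨x, hx, hxv⟩ := intermediate_value_Icc hsz.le hg.continuousOn
    (show v ∈ Icc (g s) (g z) from ⟨hcon.le, h2.le⟩)
  have hxs : s < x := by
    rcases lt_or_eq_of_le hx.1 with h | h
    · exact h
    · rw [← h] at hxv; linarith
  have := hafter x hxs hx.2
  linarith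

theorem first_time {g : ℝ → ℝ} (hg : Continuous g) {t0 z v : ℝ} (h0 : z ≤ t0) (h1 : g t0 ≤ v)
    (h2 : v < g z) : ∃ s, s ≤ t0 ∧ z < s ∧ g s = v ∧ ∀ t, z ≤ t → t < s → v < g t := by
  obtain ⟨s, hs1, hs2, hs3, hs4⟩ := last_time (g := fun t => g (-t)) (t0 := -t0) (z := -z) (v := v)
    (hg.comp continuous_neg) (by linarith) (by simpa using h1) (by simpa using h2)
  refine ⟨-s, by linarith, by linarith, hs3, ?_⟩
  intro t ht1 ht2
  have := hs4 (-t) (by linarith) (by linarith)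
  simpa using this

theorem anti_aux {k k' : ℝ → ℝ} {s z : ℝ} (hsz : s ≤ z) (hk : ∀ t, HasDerivAt k (k' t) t)
    (h : ∀ t, s < t → t < z → k' t ≤ 0) : k z ≤ k s := by
  have : AntitoneOn k (Icc s z) := by
    apply antitoneOn_of_deriv_nonpos (convex_Icc s z)
    · exact fun x _ => (hk x).continuousAt.continuousWithinAt
    · exact fun x _ => (hk x).differentiableAt.differentiableWithinAt
    · intro x hx
      rw [interior_Icc] at hx
      rw [(hk x).deriv]
      exact h x hx.1 hx.2
  exact this ⟨le_rfl, hsz⟩ ⟨hsz, le_rfl⟩ hsz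

theorem wbound {u w A Bf : ℝ → ℝ} (hu : ∀ z, HasDerivAt u (w z) z)
    (hw : ∀ z, HasDerivAt w (A z + Bf z * w z) z) (hlim : Tendsto w atBot (nhds 0))
    {θ B p z : ℝ} (hθ : 0 < θ) (hB : 0 ≤ B) (hp : ∀ t, t ≤ z → p ≤ u t)
    (hA : ∀ t, t ≤ z → u t ≤ u z → A t ≤ B) (hb : ∀ t, t ≤ z → u t ≤ u z → |Bf t| ≤ B) :
    w z ≤ θ + (B / θ + B) * (u z - p) := by
  have hk0 : 0 ≤ B / θ + B := by positivity
  have huz : 0 ≤ u z - p := by linarith [hp z le_rfl]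
  rcases le_or_gt (w z) θ with h | h
  · nlinarith [mul_nonneg hk0 huz]
  have hwc : Continuous w := continuous_iff_continuousAt.2 fun x => (hw x).continuousAt
  obtain ⟨t0, ht0⟩ := ((hlim.eventually (gt_mem_nhds hθ)).and (eventually_le_atBot z)).exists
  obtain ⟨s, -, hs2, hs3, hs4⟩ := last_time hwc ht0.2 ht0.1.le h
  have hmono : ∀ t, s ≤ t → t ≤ z → u t ≤ u z := by
    intro t h1 h2
    have := anti_aux (k := fun x => - u x) (k' := fun x => - w x) h2 (fun x => (hu x).neg)
      (fun x hx1 hx2 => by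
        have := hs4 x (by linarith) hx2.le
        linarith)
    linarith
  have key := anti_aux (k := fun x => w x - (B / θ + B) * u x)
    (k' := fun x => (A x + Bf x * w x) - (B / θ + B) * w x) hs2.le
    (fun x => (hw x).sub ((hu x).const_mul _))
    (fun x hx1 hx2 => by
      have h1 := hs4 x hx1 hx2.le
      have h2 := hmono x hx1.le hx2.le
      have h3 := hA x hx2.le h2
      have h4 := (abs_le.1 (hb x hx2.le h2)).2
      have h5 : B ≤ B / θ * w x := by
        rw [div_mul_eq_mul_div, le_div_iff₀ hθ]
        nlinarith
      have h6 : Bf x * w x ≤ B * w x := mul_le_mul_of_nonneg_right h4 (by linarith)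
      nlinarith)
  have h7 := hp s hs2.le
  have h8 : (B / θ + B) * p ≤ (B / θ + B) * u s := mul_le_mul_of_nonneg_left h7 hk0
  rw [hs3] at key
  nlinarith

theorem wbound' {u w A Bf : ℝ → ℝ} (hu : ∀ z, HasDerivAt u (w z) z)
    (hw : ∀ z, HasDerivAt w (A z + Bf z * w z) z) (hlim : Tendsto w atTop (nhds 0))
    {θ B p z : ℝ} (hθ : 0 < θ) (hB : 0 ≤ B) (hp : ∀ t, z ≤ t → p ≤ u t)
    (hA : ∀ t, z ≤ t → u t ≤ u z → A t ≤ B) (hb : ∀ t, z ≤ t → u t ≤ u z → |Bf t| ≤ B) :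
    - w z ≤ θ + (B / θ + B) * (u z - p) := by
  have := wbound (u := fun t => u (-t)) (w := fun t => - w (-t)) (A := fun t => A (-t))
    (Bf := fun t => - Bf (-t)) (z := -z) (θ := θ) (B := B) (p := p)
    (fun x => by
      have := (hu (-x)).comp x (hasDerivAt_neg x)
      exact this.congr_deriv (by ring))
    (fun x => by
      have := ((hw (-x)).comp x (hasDerivAt_neg x)).neg
      exact this.congr_deriv (by ring))
    (by
      have := (hlim.comp tendsto_neg_atBot_atTop).neg
      simpa [Function.comp_def] using this) hθ hB
    (fun t ht => hp _ (by linarith))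
    (fun t ht h => hA _ (by linarith) (by simpa using h))
    (fun t ht h => by rw [abs_neg]; exact hb _ (by linarith) (by simpa using h))
  simpa using this

theorem core {m η B r : ℝ} (hη : 0 < η) (hB : 0 < B) (hr : 0 < r) :
    ∃ ρ, 0 < ρ ∧ ρ < η / 2 ∧ ∀ (a b G u w : ℝ → ℝ) (p : ℝ),
      (∀ z, HasDerivAt u (w z) z) → (∀ z, HasDerivAt w (a (u z) + b (u z) * w z) z) →
      Tendsto u atBot (nhds p) → Tendsto u atTop (nhds p) →
      Tendsto w atBot (nhds 0) → Tendsto w atTop (nhds 0) →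
      m - ρ < p → p < m + ρ → (∀ z, p ≤ u z) →
      (∀ x ∈ Icc (m - η) (m + η), |a x| ≤ B) → (∀ x ∈ Icc (m - η) (m + η), |b x| ≤ B) →
      (∀ z, HasDerivAt G (b (u z)) (u z)) →
      (∀ x ∈ Icc (m - η) (m + η), HasDerivAt G (b x) x) →
      (∀ z, m + ρ ≤ u z → a (u z) ≤ 0) →
      (∀ x ∈ Icc (m + η / 2) (m + η), a x ≤ - r) → ∀ z, u z < m + η := by
  obtain ⟨σ, hσ, hσr⟩ : ∃ σ : ℝ, 0 < σ ∧ 4 * σ * (σ + 2 * B * η) < r * η := by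
    refine ⟨min 1 (r * η / (8 * (1 + 2 * B * η))), by positivity, ?_⟩
    set σ := min 1 (r * η / (8 * (1 + 2 * B * η))) with hs
    have h0 : 0 < σ := by positivity
    have h1 : σ ≤ 1 := min_le_left _ _
    have h2 : σ ≤ r * η / (8 * (1 + 2 * B * η)) := min_le_right _ _
    rw [le_div_iff₀ (by positivity)] at h2
    have h3 : 0 < r * η := by positivity
    nlinarith
  have hσ2 : 0 < σ / 2 := by positivity
  set Q := B / (σ / 2) + B with hQ
  have hQ0 : 0 < Q := by positivity
  refine ⟨min (η / 4) (σ / (4 * Q)), by positivity, ?_, ?_⟩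
  · exact lt_of_le_of_lt (min_le_left _ _) (by linarith)
  set ρ := min (η / 4) (σ / (4 * Q)) with hρ
  have hρ0 : 0 < ρ := by positivity
  have hρη : ρ ≤ η / 4 := min_le_left _ _
  have hρQ : Q * (2 * ρ) ≤ σ / 2 := by
    have : ρ ≤ σ / (4 * Q) := min_le_right _ _
    rw [le_div_iff₀ (by positivity)] at this
    linarith
  intro a b G u w p hu hw hub hut hwb hwt hp1 hp2 hpu ha hb hG hG2 hneg hnegr zs
  by_contra hcon
  push Not at hcon
  have huc : Continuous u := continuous_iff_continuousAt.2 fun x => (hu x).continuousAt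
  obtain ⟨t0, ht0⟩ := ((hub.eventually (gt_mem_nhds hp2)).and (eventually_le_atBot zs)).exists
  obtain ⟨ta, -, hta2, hta3, hta4⟩ := last_time huc ht0.2 ht0.1.le
    (show m + ρ < u zs by linarith)
  obtain ⟨t1, ht1⟩ := ((hut.eventually (gt_mem_nhds hp2)).and (eventually_ge_atTop zs)).exists
  obtain ⟨tb, -, htb2, htb3, htb4⟩ := first_time huc ht1.2 ht1.1.le
    (show m + ρ < u zs by linarith)
  have hge : ∀ t, ta ≤ t → t ≤ tb → m + ρ ≤ u t := by
    intro t h1 h2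
    rcases le_or_gt t zs with h | h
    · rcases eq_or_lt_of_le h1 with h3 | h3
      · rw [← h3, hta3]
      · exact (hta4 t h3 h).le
    · rcases eq_or_lt_of_le h2 with h3 | h3
      · rw [h3, htb3]
      · exact (htb4 t h.le h3).le
  -- bounds for w at crossing times
  have hwa : w ta ≤ σ := by
    have := wbound (A := fun t => a (u t)) (Bf := fun t => b (u t)) (z := ta) (p := p) hu hw hwb
      hσ2 hB.le (fun t _ => hpu t)
      (fun t _ h => (abs_le.1 (ha (u t) ⟨by linarith [hpu t], by linarith⟩)).2)
      (fun t _ h => hb (u t) ⟨by linarith [hpu t], by linarith⟩)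
    rw [← hQ, hta3] at this
    nlinarith
  have hwb' : - w tb ≤ σ := by
    have := wbound' (A := fun t => a (u t)) (Bf := fun t => b (u t)) (z := tb) (p := p) hu hw hwt
      hσ2 hB.le (fun t _ => hpu t)
      (fun t _ h => (abs_le.1 (ha (u t) ⟨by linarith [hpu t], by linarith⟩)).2)
      (fun t _ h => hb (u t) ⟨by linarith [hpu t], by linarith⟩)
    rw [← hQ, htb3] at this
    nlinarith
  obtain ⟨s, hs1, hs2, hs3, hs4⟩ := last_time huc hta2.le
    (show u ta ≤ m + η / 2 by linarith) (show m + η / 2 < u zs by linarith)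
  obtain ⟨t, ht1, ht2, ht3, ht4⟩ := first_time (g := fun x => - u x) huc.neg hs2.le
    (show - u zs ≤ - (m + η) by linarith) (show - (m + η) < - u s by linarith)
  have hyd : ∀ x, HasDerivAt (fun z => w z - G (u z)) (a (u x)) x := by
    intro x
    have h1 := (hw x).sub ((hG x).comp x (hu x))
    exact h1.congr_deriv (by ring)
  have hy1 : ∀ x, ta ≤ x → x ≤ tb → w x - G (u x) ≤ w ta - G (u ta) := by
    intro x h1 h2
    exact anti_aux h1 hyd (fun q hq1 hq2 => hneg q (hge q hq1.le (by linarith)))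
  have hy2 : ∀ x, ta ≤ x → x ≤ tb → w tb - G (u tb) ≤ w x - G (u x) := by
    intro x h1 h2
    exact anti_aux h2 hyd (fun q hq1 hq2 => hneg q (hge q (by linarith) hq2.le))
  have hW0 : 0 < σ + 2 * B * η := by positivity
  set W := σ + 2 * B * η with hW
  have hrange : ∀ x, s ≤ x → x ≤ t → m + η / 2 ≤ u x ∧ u x ≤ m + η := by
    intro x h1 h2
    constructor
    · rcases eq_or_lt_of_le h1 with h | h
      · rw [← h, hs3]
      · exact (hs4 x h (by linarith)).le
    · rcases eq_or_lt_of_le h2 with h | h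
      · rw [h]; linarith
      · linarith [ht4 x h1 h]
  have hwW : ∀ x, s ≤ x → x ≤ t → w x ≤ W := by
    intro x h1 h2
    have h3 := hrange x h1 h2
    have h4 := hy1 x (by linarith) (by linarith)
    have h5 : ‖G (u x) - G (u ta)‖ ≤ B * ‖u x - u ta‖ := by
      apply Convex.norm_image_sub_le_of_norm_hasDerivWithin_le (s := Icc (m - η) (m + η))
        (f' := b)
      · exact fun y hy => (hG2 y hy).hasDerivWithinAt
      · exact fun y hy => by simpa using hb y hy
      · exact convex_Icc _ _
      · rw [hta3]; constructor <;> linarith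
      · constructor <;> linarith
    rw [Real.norm_eq_abs, Real.norm_eq_abs, abs_of_nonneg (show 0 ≤ u x - u ta by linarith)] at h5
    have h6 := (abs_le.1 h5).2
    have h7 : B * (u x - u ta) ≤ B * (2 * η) :=
      mul_le_mul_of_nonneg_left (by linarith) hB.le
    linarith
  have hkey := anti_aux (k := fun z => (w z - G (u z)) + r / W * u z)
    (k' := fun z => a (u z) + r / W * w z) ht2.le
    (fun x => (hyd x).add ((hu x).const_mul _))
    (fun x hx1 hx2 => by
      have h1 := hnegr (u x) (hrange x hx1.le hx2.le)
      have h2 := hwW x hx1.le hx2.le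
      have h3 : r / W * w x ≤ r := by
        calc r / W * w x ≤ r / W * W := mul_le_mul_of_nonneg_left h2 (by positivity)
          _ = r := by field_simp
      linarith)
  have hut' : u t = m + η := by linarith
  rw [hs3, hut'] at hkey
  have e1 := hy1 s hs1 (by linarith)
  have e2 := hy2 t (by linarith) (by linarith)
  rw [hs3, hta3] at e1
  rw [hut', htb3] at e2
  have e3 : r / W * (η / 2) ≤ 2 * σ := by nlinarith
  rw [div_mul_eq_mul_div, div_le_iff₀ hW0] at e3
  nlinarith

theorem max_point {u w D : ℝ → ℝ} {p : ℝ} (hu : ∀ z, HasDerivAt u (w z) z)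
    (hw : ∀ z, HasDerivAt w (D z) z)
    (hub : Tendsto u atBot (nhds p)) (hut : Tendsto u atTop (nhds p)) {z : ℝ} (hz : p < u z) :
    ∃ z0, (∀ t, u t ≤ u z0) ∧ w z0 = 0 ∧ D z0 ≤ 0 := by
  have huc : Continuous u := continuous_iff_continuousAt.2 fun x => (hu x).continuousAt
  obtain ⟨z0, hz0⟩ := huc.exists_forall_ge' z (by
    rw [cocompact_eq_atBot_atTop, eventually_sup]
    exact ⟨(hub.eventually (gt_mem_nhds hz)).mono fun _ h => le_of_lt h,
      (hut.eventually (gt_mem_nhds hz)).mono fun _ h => le_of_lt h⟩)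
  have hmax : IsLocalMax u z0 := Eventually.of_forall hz0
  have hw0 : w z0 = 0 := hmax.hasDerivAt_eq_zero (hu z0)
  refine ⟨z0, hz0, hw0, ?_⟩
  by_contra hcon
  push Not at hcon
  have hder : deriv u = w := funext fun x => (hu x).deriv
  have hmin : IsLocalMin u z0 := by
    apply isLocalMin_of_deriv_deriv_pos
    · rw [hder, (hw z0).deriv]; exact hcon
    · rw [hder, hw0]
    · exact huc.continuousAt
  have heq : u =ᶠ[nhds z0] fun _ => u z0 := by
    filter_upwards [hmin] with x hx
    exact le_antisymm (hz0 x) hx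
  have h2 := heq.deriv
  rw [hder] at h2
  have h3 := h2.deriv_eq
  rw [(hw z0).deriv] at h3
  simp at h3
  linarith

theorem min_point {u w D : ℝ → ℝ} {p : ℝ} (hu : ∀ z, HasDerivAt u (w z) z)
    (hw : ∀ z, HasDerivAt w (D z) z)
    (hub : Tendsto u atBot (nhds p)) (hut : Tendsto u atTop (nhds p)) {z : ℝ} (hz : u z < p) :
    ∃ z0, (∀ t, u z0 ≤ u t) ∧ w z0 = 0 ∧ 0 ≤ D z0 := by
  obtain ⟨z0, h1, h2, h3⟩ := max_point (u := fun z => - u z) (w := fun z => - w z)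
    (D := fun z => - D z) (p := -p) (z := z) (fun z => (hu z).neg) (fun z => (hw z).neg)
    hub.neg hut.neg (by linarith)
  exact ⟨z0, fun t => by linarith [h1 t], by linarith, by linarith⟩

theorem mu_zero {u w a b F : ℝ → ℝ} {p : ℝ} (hu : ∀ z, HasDerivAt u (w z) z)
    (hw : ∀ z, HasDerivAt w (a (u z) + b (u z) * w z) z)
    (hub : Tendsto u atBot (nhds p)) (hut : Tendsto u atTop (nhds p))
    (hwb : Tendsto w atBot (nhds 0)) (hwt : Tendsto w atTop (nhds 0))
    (hne : ¬ ∀ z, u z = p ∧ w z = 0)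
    (hF : ∀ z, HasDerivAt F (a (u z)) (u z)) (hFp : ContinuousAt F p)
    (hb : Continuous fun z => b (u z)) : ∃ z, b (u z) = 0 := by
  by_contra hcon
  push Not at hcon
  have hE : ∀ z, HasDerivAt (fun z => w z ^ 2 / 2 - F (u z)) (b (u z) * w z ^ 2) z := by
    intro z
    have h1 := (((hw z).pow 2).div_const 2).sub ((hF z).comp z (hu z))
    exact h1.congr_deriv (by simp; ring)
  have hEb : Tendsto (fun z => w z ^ 2 / 2 - F (u z)) atBot (nhds (0 ^ 2 / 2 - F p)) :=
    ((hwb.pow 2).div_const 2).sub (hFp.tendsto.comp hub)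
  have hEt : Tendsto (fun z => w z ^ 2 / 2 - F (u z)) atTop (nhds (0 ^ 2 / 2 - F p)) :=
    ((hwt.pow 2).div_const 2).sub (hFp.tendsto.comp hut)
  have hdiff : Differentiable ℝ (fun z => w z ^ 2 / 2 - F (u z)) := fun z =>
    (hE z).differentiableAt
  have hsign : (∀ z, 0 < b (u z)) ∨ (∀ z, b (u z) < 0) := by
    by_contra hs
    push Not at hs
    obtain ⟨⟨x, hx⟩, ⟨y, hy⟩⟩ := hs
    obtain ⟨z, hz⟩ := mem_range_of_exists_le_of_exists_ge hb ⟨x, hx⟩ ⟨y, hy⟩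
    exact hcon z hz
  have hconst : ∀ z, w z ^ 2 / 2 - F (u z) = 0 ^ 2 / 2 - F p := by
    rcases hsign with h | h
    · have hm : Monotone (fun z => w z ^ 2 / 2 - F (u z)) := by
        apply monotone_of_deriv_nonneg hdiff
        intro x
        rw [(hE x).deriv]
        exact mul_nonneg (h x).le (sq_nonneg _)
      exact fun z => le_antisymm (hm.ge_of_tendsto hEt z) (hm.le_of_tendsto hEb z)
    · have hm : Antitone (fun z => w z ^ 2 / 2 - F (u z)) := by
        apply antitone_of_deriv_nonpos hdiff
        intro x
        rw [(hE x).deriv]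
        exact mul_nonpos_of_nonpos_of_nonneg (h x).le (sq_nonneg _)
      exact fun z => le_antisymm (hm.ge_of_tendsto hEb z) (hm.le_of_tendsto hEt z)
  have hw0 : ∀ z, w z = 0 := by
    intro z
    have h1 := hE z
    have h2 : (fun z => w z ^ 2 / 2 - F (u z)) = fun _ => (0 ^ 2 / 2 - F p) := funext hconst
    rw [h2] at h1
    have h3 := h1.unique (hasDerivAt_const z _)
    rcases mul_eq_zero.1 h3 with h | h
    · exact absurd h (hcon z)
    · exact pow_eq_zero_iff (two_ne_zero) |>.1 h
  apply hne
  intro z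
  refine ⟨?_, hw0 z⟩
  have hud : Differentiable ℝ u := fun z => (hu z).differentiableAt
  have hcst : ∀ x, u x = u z := fun x => is_const_of_deriv_eq_zero hud
    (fun y => by rw [(hu y).deriv, hw0 y]) x z
  have : Tendsto u atTop (nhds (u z)) := by
    rw [show u = fun _ => u z from funext hcst]
    exact tendsto_const_nhds
  exact tendsto_nhds_unique this hut

theorem antideriv {J : Set ℝ} (hJo : IsOpen J) (hJ : J.OrdConnected) {m : ℝ} (hm : m ∈ J)
    {f : ℝ → ℝ} (hf : ContinuousOn f J) : ∃ G : ℝ → ℝ, ∀ x ∈ J, HasDerivAt G (f x) x := by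
  refine ⟨fun x => ∫ t in m..x, f t, fun x hx => ?_⟩
  apply intervalIntegral.integral_hasDerivAt_right
  · exact (hf.mono (hJ.uIcc_subset hm hx)).intervalIntegrable
  · exact hf.stronglyMeasurableAtFilter hJo x hx
  · exact hf.continuousAt (hJo.mem_nhds hx)

theorem absThm {J : Set ℝ} (hJo : IsOpen J) (hJ : J.OrdConnected) {φ d g1 g2 : ℝ → ℝ}
    {m M0 η1 : ℝ} (hm : m ∈ J) (hφ : ContinuousOn φ J) (hd : ContinuousOn d J)
    (hg1 : ContinuousOn g1 J) (hg2 : ContinuousOn g2 J) (hg1p : ∀ x ∈ J, 0 < g1 x)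
    (hg2p : ∀ x ∈ J, 0 < g2 x) (hM0 : ∀ x ∈ J, |d x| ≤ M0) (hdm : d m = 0)
    (hmono : StrictMonoOn φ (J ∩ Iic m)) (hη1 : 0 < η1)
    (hanti : StrictAntiOn φ (Icc m (m + η1))) :
    ∀ ε : ℝ, 0 < ε → ∃ δ : ℝ, 0 < δ ∧ ∀ c, φ m - δ < c → c < φ m →
      ∀ (μ : ℝ) (u w : ℝ → ℝ) (p : ℝ), (∀ z, HasDerivAt u (w z) z) →
      (∀ z, HasDerivAt w (g1 (u z) * (φ (u z) - c) + g2 (u z) * (d (u z) + μ) * w z) z) →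
      (∀ z, u z ∈ J) → p ∈ J → p < m → φ p = c →
      Tendsto u atBot (nhds p) → Tendsto u atTop (nhds p) →
      Tendsto w atBot (nhds 0) → Tendsto w atTop (nhds 0) → (¬ ∀ z, u z = p ∧ w z = 0) →
      (∀ z y, m ≤ y → y ≤ u z → φ (u z) ≤ max (φ y) c) →
      |μ| < ε ∧ ∀ z, Real.sqrt ((u z - m) ^ 2 + (w z) ^ 2) < ε := by
  intro ε hε
  obtain ⟨η0, hη0, hη01, hI0⟩ : ∃ η0, 0 < η0 ∧ η0 ≤ η1 ∧ Icc (m - η0) (m + η0) ⊆ J := by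
    obtain ⟨e, he, hsub⟩ := Metric.isOpen_iff.1 hJo m hm
    refine ⟨min (e / 2) η1, by positivity, min_le_right _ _, fun x hx => hsub ?_⟩
    have := min_le_left (e / 2) η1
    rw [Real.ball_eq_Ioo]
    constructor <;> linarith [hx.1, hx.2]
  obtain ⟨C1, hC1⟩ := isCompact_Icc.exists_bound_of_continuousOn (hg1.mono hI0)
  obtain ⟨C2, hC2⟩ := isCompact_Icc.exists_bound_of_continuousOn (hg2.mono hI0)
  obtain ⟨C3, hC3⟩ := isCompact_Icc.exists_bound_of_continuousOn (hφ.mono hI0)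
  have hmI : m ∈ Icc (m - η0) (m + η0) := by constructor <;> linarith
  obtain ⟨xγ, hxγ, hγ⟩ := isCompact_Icc.exists_isMinOn ⟨m, hmI⟩ (hg1.mono hI0)
  have hγ0 : 0 < g1 xγ := hg1p _ (hI0 hxγ)
  set γ := g1 xγ
  have hC10 : 0 ≤ C1 := (norm_nonneg _).trans (hC1 m hmI)
  have hC20 : 0 ≤ C2 := (norm_nonneg _).trans (hC2 m hmI)
  have hC30 : 0 ≤ C3 := (norm_nonneg _).trans (hC3 m hmI)
  have hM00 : 0 ≤ M0 := (abs_nonneg _).trans (hM0 m hm)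
  obtain ⟨B, hBdef⟩ : ∃ B, B = C1 * (C3 + (|φ m| + 1)) + C2 * (2 * M0) + 1 := ⟨_, rfl⟩
  have hB1 : C1 * (C3 + (|φ m| + 1)) ≤ B := by
    have : 0 ≤ C2 * (2 * M0) := by positivity
    linarith
  have hB2 : C2 * (2 * M0) ≤ B := by
    have : 0 ≤ C1 * (C3 + (|φ m| + 1)) := by positivity
    linarith
  have hB : 0 < B := by rw [hBdef]; positivity
  obtain ⟨η2, hη2, hd2⟩ : ∃ η2, 0 < η2 ∧ ∀ x, |x - m| < η2 → |d x| < ε := by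
    have := Metric.continuousAt_iff.1 (hd.continuousAt (hJo.mem_nhds hm)) ε hε
    obtain ⟨η2, h1, h2⟩ := this
    refine ⟨η2, h1, fun x hx => ?_⟩
    have := h2 (show dist x m < η2 from hx)
    rw [hdm, Real.dist_eq, sub_zero] at this
    exact this
  have hε4 : 0 < ε / 4 := by positivity
  obtain ⟨Q, hQ⟩ : ∃ Q, Q = B / (ε / 4) + B := ⟨_, rfl⟩
  have hQ0 : 0 < Q := by rw [hQ]; positivity
  obtain ⟨η, hη, e1, e2, e3, e4⟩ : ∃ η, 0 < η ∧ η ≤ η0 ∧ η ≤ η2 ∧ η ≤ ε / 4 ∧ Q * (2 * η) ≤ ε / 4 := by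
    refine ⟨min (min η0 η2) (min (ε / 4) (ε / (8 * Q))), by positivity,
      (min_le_left _ _).trans (min_le_left _ _), (min_le_left _ _).trans (min_le_right _ _),
      (min_le_right _ _).trans (min_le_left _ _), ?_⟩
    have h : min (min η0 η2) (min (ε / 4) (ε / (8 * Q))) ≤ ε / (8 * Q) :=
      (min_le_right _ _).trans (min_le_right _ _)
    rw [le_div_iff₀ (by positivity)] at h
    linarith
  have hIη : Icc (m - η) (m + η) ⊆ Icc (m - η0) (m + η0) := Icc_subset_Icc (by linarith) (by linarith)
  have hgap : φ (m + η / 2) < φ m :=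
    hanti ⟨le_rfl, by linarith⟩ ⟨by linarith, by linarith⟩ (by linarith)
  obtain ⟨r, hrdef⟩ : ∃ r, r = γ * ((φ m - φ (m + η / 2)) / 2) := ⟨_, rfl⟩
  have hr : 0 < r := by
    rw [hrdef]
    exact mul_pos hγ0 (by linarith)
  obtain ⟨ρ, hρ, hρη, hcore⟩ := core (m := m) hη hB hr
  have hgapρ : φ (m + ρ) < φ m :=
    hanti ⟨le_rfl, by linarith⟩ ⟨by linarith, by linarith⟩ (by linarith)
  have hmρJ : m - ρ ∈ J := hI0 ⟨by linarith, by linarith⟩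
  have hgapρ' : φ (m - ρ) < φ m :=
    hmono ⟨hmρJ, by simp only [mem_Iic]; linarith⟩ ⟨hm, mem_Iic.2 le_rfl⟩ (by linarith)
  refine ⟨min (min 1 ((φ m - φ (m + η / 2)) / 2)) (min (φ m - φ (m + ρ)) (φ m - φ (m - ρ))),
    lt_min (lt_min one_pos (by linarith)) (lt_min (by linarith) (by linarith)), ?_⟩
  intro c hc1 hc2 μ u w p hu hw huJ hpJ hpm hpc hub hut hwb hwt hne hdown
  have hmin1 := min_le_left (min 1 ((φ m - φ (m + η / 2)) / 2))
    (min (φ m - φ (m + ρ)) (φ m - φ (m - ρ)))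
  have hmin2 := min_le_right (min 1 ((φ m - φ (m + η / 2)) / 2))
    (min (φ m - φ (m + ρ)) (φ m - φ (m - ρ)))
  have f1 : φ m - 1 < c := by linarith [hmin1.trans (min_le_left _ _)]
  have f2 : φ m - (φ m - φ (m + η / 2)) / 2 < c := by linarith [hmin1.trans (min_le_right _ _)]
  have f3 : φ (m + ρ) < c := by linarith [hmin2.trans (min_le_left _ _)]
  have f4 : φ (m - ρ) < c := by linarith [hmin2.trans (min_le_right _ _)]
  have hca : |c| ≤ |φ m| + 1 := by
    have := abs_le.1 (le_refl |φ m|)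
    rw [abs_le]
    constructor <;> linarith
  have hpρ : m - ρ < p := by
    by_contra hcon
    push Not at hcon
    have := hmono.monotoneOn ⟨hpJ, hpm.le⟩ ⟨hmρJ, by simp only [mem_Iic]; linarith⟩ hcon
    linarith
  have hpu : ∀ z, p ≤ u z := by
    intro z
    by_contra hcon
    push Not at hcon
    obtain ⟨z0, h1, h2, h3⟩ := min_point hu hw hub hut hcon
    have h4 : u z0 < p := (h1 z).trans_lt hcon
    have h5 := hmono ⟨huJ z0, by simp only [mem_Iic]; linarith⟩ ⟨hpJ, hpm.le⟩ h4
    rw [h2, mul_zero, add_zero] at h3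
    have := mul_neg_of_pos_of_neg (hg1p _ (huJ z0)) (show φ (u z0) - c < 0 by linarith)
    linarith
  have hac : ContinuousOn (fun x => g1 x * (φ x - c)) J := hg1.mul (hφ.sub continuousOn_const)
  have hbc : ContinuousOn (fun x => g2 x * (d x + μ)) J := hg2.mul (hd.add continuousOn_const)
  obtain ⟨F, hF⟩ := antideriv hJo hJ hm hac
  obtain ⟨G, hG⟩ := antideriv hJo hJ hm hbc
  have huc : Continuous u := continuous_iff_continuousAt.2 fun x => (hu x).continuousAt
  obtain ⟨zμ, hzμ⟩ := mu_zero (a := fun x => g1 x * (φ x - c)) (b := fun x => g2 x * (d x + μ))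
    hu hw hub hut hwb hwt hne (fun z => hF _ (huJ z)) (hF p hpJ).continuousAt
    (hbc.comp_continuous huc huJ)
  have hμ : μ = - d (u zμ) := by
    rcases mul_eq_zero.1 hzμ with h | h
    · exact absurd h (hg2p _ (huJ zμ)).ne'
    · linarith
  have hμM : |μ| ≤ M0 := by rw [hμ, abs_neg]; exact hM0 _ (huJ zμ)
  have ha : ∀ x ∈ Icc (m - η) (m + η), |g1 x * (φ x - c)| ≤ B := by
    intro x hx
    have h1 := hC1 x (hIη hx)
    have h3 := hC3 x (hIη hx)
    rw [Real.norm_eq_abs] at h1 h3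
    rw [abs_mul]
    refine le_trans (mul_le_mul h1 ?_ (abs_nonneg _) hC10) hB1
    exact (abs_sub _ _).trans (add_le_add h3 hca)
  have hb : ∀ x ∈ Icc (m - η) (m + η), |g2 x * (d x + μ)| ≤ B := by
    intro x hx
    have h1 := hC2 x (hIη hx)
    rw [Real.norm_eq_abs] at h1
    rw [abs_mul]
    refine le_trans (mul_le_mul h1 ?_ (abs_nonneg _) hC20) hB2
    exact (abs_add_le _ _).trans (by linarith [hM0 x (hI0 (hIη hx))])
  have hup : ∀ z, u z < m + η := by
    refine hcore (fun x => g1 x * (φ x - c)) (fun x => g2 x * (d x + μ)) G u w p hu hw hub hut hwb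
      hwt hpρ (by linarith) hpu ha hb (fun z => hG _ (huJ z)) (fun x hx => hG x (hI0 (hIη hx))) ?_ ?_
    · intro z hz
      have h1 := hdown z (m + ρ) (by linarith) hz
      rw [max_eq_right f3.le] at h1
      exact mul_nonpos_of_nonneg_of_nonpos (hg1p _ (huJ z)).le (by linarith)
    · intro x hx
      have h1 : φ x ≤ φ (m + η / 2) := hanti.antitoneOn ⟨by linarith, by linarith⟩
        ⟨by linarith [hx.1], by linarith [hx.2]⟩ hx.1
      have h2 : γ ≤ g1 x := hγ (hIη ⟨by linarith [hx.1], hx.2⟩)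
      have h3 : γ * ((φ m - φ (m + η / 2)) / 2) ≤ g1 x * (c - φ x) :=
        mul_le_mul h2 (by linarith) (by linarith) (hγ0.le.trans h2)
      have h4 : g1 x * (φ x - c) = - (g1 x * (c - φ x)) := by ring
      simp only [h4]
      linarith
  have hlo : ∀ z, m - η < u z := fun z => by linarith [hpu z]
  have hum : ∀ z, |u z - m| < η := fun z => abs_lt.2 ⟨by linarith [hlo z], by linarith [hup z]⟩
  refine ⟨?_, fun z => ?_⟩
  · rw [hμ, abs_neg]
    exact hd2 _ (by linarith [hum zμ])
  have hw1 : w z ≤ ε / 2 := by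
    have := wbound (A := fun t => g1 (u t) * (φ (u t) - c)) (Bf := fun t => g2 (u t) * (d (u t) + μ))
      (z := z) (p := m - η) hu hw hwb hε4 hB.le (fun t _ => (hlo t).le)
      (fun t _ _ => (abs_le.1 (ha (u t) ⟨(hlo t).le, (hup t).le⟩)).2)
      (fun t _ _ => hb (u t) ⟨(hlo t).le, (hup t).le⟩)
    rw [← hQ] at this
    have h2 : Q * (u z - (m - η)) ≤ Q * (2 * η) :=
      mul_le_mul_of_nonneg_left (by linarith [hup z]) hQ0.le
    linarith
  have hw2 : - w z ≤ ε / 2 := by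
    have := wbound' (A := fun t => g1 (u t) * (φ (u t) - c))
      (Bf := fun t => g2 (u t) * (d (u t) + μ))
      (z := z) (p := m - η) hu hw hwt hε4 hB.le (fun t _ => (hlo t).le)
      (fun t _ _ => (abs_le.1 (ha (u t) ⟨(hlo t).le, (hup t).le⟩)).2)
      (fun t _ _ => hb (u t) ⟨(hlo t).le, (hup t).le⟩)
    rw [← hQ] at this
    have h2 : Q * (u z - (m - η)) ≤ Q * (2 * η) :=
      mul_le_mul_of_nonneg_left (by linarith [hup z]) hQ0.le
    linarith
  rw [Real.sqrt_lt' hε]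
  have h1 : (u z - m) ^ 2 ≤ (ε / 4) ^ 2 := sq_le_sq' (by linarith [(abs_lt.1 (hum z)).1])
    (by linarith [(abs_lt.1 (hum z)).2])
  have h2 : (w z) ^ 2 ≤ (ε / 2) ^ 2 := sq_le_sq' (by linarith) hw1
  nlinarith

theorem stmt17
    (V V' V'' κ : ℝ → ℝ) (τ UM K K₁ : ℝ) (uMx umx : ℝ → ℝ)
    (u1f u0f u2f : ℝ → ℝ)
    (hA1 : A1 V V' V'' UM) (hA2 : A2 κ) (hτ : 0 < τ)
    (huMx : UMaxHyp V' UM uMx) (humx : UMinHyp V' UM umx)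
    (hK1 : K1Hyp V V' UM umx K₁)
    (hK0 : V' 0 < K) (hKM : K < V' UM)
    (hC : CondC V' κ UM K₁ K)
    (hzD1 : ∀ cc, (K, cc) ∈ D1 V V' UM uMx umx →
      ZerosD1 V K cc (u1f cc) (u0f cc) (u2f cc))
    (hzD2 : ∀ cc, (K, cc) ∈ D2 V V' umx K₁ → ZerosD2 V K cc (u0f cc) (u2f cc)) :
    (∀ ε : ℝ, 0 < ε → ∃ δ : ℝ, 0 < δ ∧
      ∀ cc, cMf V uMx K - δ < cc → cc < cMf V uMx K →
        (K, cc) ∈ D1 V V' UM uMx umx →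
        ∀ (μ : ℝ) (u w : ℝ → ℝ), IsTVSol V V' κ τ K cc μ u w → (∀ z, 0 < u z) →
          HO (u1f cc) u w →
          |μ| < ε ∧ ∀ z, Real.sqrt ((u z - uMx K) ^ 2 + (w z) ^ 2) < ε) ∧
    (∀ ε : ℝ, 0 < ε → ∃ δ : ℝ, 0 < δ ∧
      ∀ cc, cmf V umx K < cc → cc < cmf V umx K + δ →
        (K, cc) ∈ D1 V V' UM uMx umx ∪ D2 V V' umx K₁ →
        ∀ (μ : ℝ) (u w : ℝ → ℝ), IsTVSol V V' κ τ K cc μ u w → (∀ z, 0 < u z) →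
          HO (u2f cc) u w →
          |μ| < ε ∧ ∀ z, Real.sqrt ((u z - umx K) ^ 2 + (w z) ^ 2) < ε) := by
  obtain ⟨hV, hV'c, hV'd, -, hV'pos, -, -, hUM, hV'max, hV''⟩ := hA1
  obtain ⟨⟨hm10, hm1U⟩, hm1K⟩ := huMx K hK0 hKM
  have hK : 0 < K := hm1K ▸ hV'pos _ hm10
  obtain ⟨hm2U, hm2K⟩ := humx K hK hKM
  obtain ⟨m1, hm1⟩ : ∃ m1, m1 = uMx K := ⟨_, rfl⟩
  obtain ⟨m2, hm2⟩ : ∃ m2, m2 = umx K := ⟨_, rfl⟩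
  rw [← hm1] at hm10 hm1U hm1K
  rw [← hm2] at hm2U hm2K
  -- monotonicity of the derivative of V
  have hVmono : StrictMonoOn V' (Icc 0 UM) := by
    have hc : ContinuousOn V' (Icc 0 UM) := hV'c.mono Icc_subset_Ici_self
    rcases hasDerivWithinAt_forall_lt_or_forall_gt_of_forall_ne (convex_Ioo 0 UM) (f := V')
      (f' := V'') (m := 0) (fun x hx => (hV'd x hx.1).hasDerivWithinAt)
      (fun x hx h => hx.2.ne ((hV'' x hx.1).1 h)) with h | h
    · exfalso
      have : StrictAntiOn V' (Icc 0 UM) := by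
        apply strictAntiOn_of_deriv_neg (convex_Icc _ _) hc
        intro x hx
        rw [interior_Icc] at hx
        rw [(hV'd x hx.1).deriv]
        exact h x hx
      have := this ⟨hm10.le, hm1U.le⟩ ⟨hUM.le, le_rfl⟩ hm1U
      linarith
    · apply strictMonoOn_of_deriv_pos (convex_Icc _ _) hc
      intro x hx
      rw [interior_Icc] at hx
      rw [(hV'd x hx.1).deriv]
      exact h x hx
  have hVanti : StrictAntiOn V' (Ici UM) := by
    have hc : ContinuousOn V' (Ici UM) := hV'c.mono (Ici_subset_Ici.2 hUM.le)
    rcases hasDerivWithinAt_forall_lt_or_forall_gt_of_forall_ne (convex_Ioi UM) (f := V')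
      (f' := V'') (m := 0) (fun x hx => (hV'd x (hUM.trans hx)).hasDerivWithinAt)
      (fun x hx h => (ne_of_gt hx) ((hV'' x (hUM.trans hx)).1 h)) with h | h
    · apply strictAntiOn_of_deriv_neg (convex_Ici _) hc
      intro x hx
      rw [interior_Ici] at hx
      rw [(hV'd x (hUM.trans hx)).deriv]
      exact h x hx
    · exfalso
      have : StrictMonoOn V' (Ici UM) := by
        apply strictMonoOn_of_deriv_pos (convex_Ici _) hc
        intro x hx
        rw [interior_Ici] at hx
        rw [(hV'd x (hUM.trans hx)).deriv]
        exact h x hx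
      have := this (mem_Ici.2 le_rfl) (mem_Ici.2 hm2U.le) hm2U
      linarith
  -- the function φ
  obtain ⟨φ, hφdef⟩ : ∃ φ : ℝ → ℝ, φ = fun u => K * u - V u := ⟨_, rfl⟩
  have hφd : ∀ x, 0 < x → HasDerivAt φ (K - V' x) x := by
    intro x hx
    have h1 : HasDerivAt V (V' x) x := (hV x hx.le).hasDerivAt (Ici_mem_nhds hx)
    have h2 := ((hasDerivAt_id x).const_mul K).sub h1
    rw [hφdef]
    exact h2.congr_deriv (by ring)
  have hφc : ContinuousOn φ (Ici 0) := by
    rw [hφdef]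
    exact (continuousOn_const.mul continuousOn_id).sub
      (fun x hx => (hV x hx).continuousWithinAt)
  have hφ1 : StrictMonoOn φ (Icc 0 m1) := by
    apply strictMonoOn_of_deriv_pos (convex_Icc _ _) (hφc.mono Icc_subset_Ici_self)
    intro x hx
    rw [interior_Icc] at hx
    rw [(hφd x hx.1).deriv]
    have := hVmono ⟨hx.1.le, by linarith [hx.2]⟩ ⟨hm10.le, hm1U.le⟩ hx.2
    linarith
  have hφ2 : StrictAntiOn φ (Icc m1 m2) := by
    apply strictAntiOn_of_deriv_neg (convex_Icc _ _)
      (hφc.mono fun x hx => mem_Ici.2 (hm10.le.trans hx.1))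
    intro x hx
    rw [interior_Icc] at hx
    rw [(hφd x (hm10.trans hx.1)).deriv]
    rcases le_total x UM with h | h
    · have := hVmono ⟨hm10.le, hm1U.le⟩ ⟨(hm10.trans hx.1).le, h⟩ hx.1
      linarith
    · have := hVanti (mem_Ici.2 h) (mem_Ici.2 hm2U.le) hx.2
      linarith
  have hφ3 : StrictMonoOn φ (Ici m2) := by
    apply strictMonoOn_of_deriv_pos (convex_Ici _)
      (hφc.mono (Ici_subset_Ici.2 (by linarith)))
    intro x hx
    rw [interior_Ici] at hx
    have hx' : m2 < x := hx
    rw [(hφd x (by linarith)).deriv]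
    have := hVanti (mem_Ici.2 hm2U.le) (mem_Ici.2 (by linarith)) hx'
    linarith
  have hm12 : m1 < m2 := hm1U.trans hm2U
  -- zeros of f
  have hfz : ∀ c x, fTV V K c x = 0 → φ x = c := by
    intro c x h
    unfold fTV at h
    rcases div_eq_zero_iff.1 h with h | h
    · rw [hφdef]; simp only; linarith
    · exact absurd h hK.ne'
  have hrolle : ∀ x y c, 0 < x → x < y → φ x = c → φ y = c →
      (x < m1 ∧ m1 < y) ∨ (x < m2 ∧ m2 < y) := by
    intro x y c hx hxy h1 h2
    by_contra hcon
    push Not at hcon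
    obtain ⟨h3, h4⟩ := hcon
    rcases lt_or_ge x m1 with h5 | h5
    · have := hφ1 ⟨hx.le, h5.le⟩ ⟨by linarith, h3 h5⟩ hxy
      linarith
    · rcases lt_or_ge x m2 with h6 | h6
      · have := hφ2 ⟨h5, h6.le⟩ ⟨by linarith, h4 h6⟩ hxy
        linarith
      · have := hφ3 (mem_Ici.2 h6) (mem_Ici.2 (by linarith)) hxy
        linarith
  have hφm1 : φ m1 = cMf V uMx K := by rw [hφdef, hm1]; rfl
  have hφm2 : φ m2 = cmf V umx K := by rw [hφdef, hm2]; rfl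
  have hφ0 : φ 0 = c0v V := by rw [hφdef]; simp [c0v]
  have hD1z : ∀ cc, (K, cc) ∈ D1 V V' UM uMx umx → 0 < u1f cc ∧ u1f cc < m1 ∧ m2 < u2f cc ∧
      φ (u1f cc) = cc ∧ φ (u2f cc) = cc := by
    intro cc h
    obtain ⟨h1, h2, h3, h4, h5, h6, -⟩ := hzD1 cc h
    have h4 := hfz _ _ h4
    have h5 := hfz _ _ h5
    have h6 := hfz _ _ h6
    refine ⟨h1, ?_, ?_, h4, h6⟩
    · rcases hrolle _ _ cc h1 h2 h4 h5 with h | h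
      · exact h.1
      · rcases hrolle _ _ cc (h1.trans h2) h3 h5 h6 with h' | h' <;> linarith [h.1, h'.1, h.2, h'.2]
    · rcases hrolle _ _ cc (h1.trans h2) h3 h5 h6 with h | h
      · rcases hrolle _ _ cc h1 h2 h4 h5 with h' | h' <;> linarith [h.1, h'.1, h.2, h'.2]
      · exact h.2
  have hD2z : ∀ cc, (K, cc) ∈ D2 V V' umx K₁ → m2 < u2f cc ∧ φ (u2f cc) = cc ∧ cc ≤ φ 0 := by
    intro cc h
    have hcc : cc ≤ φ 0 := by
      rw [hφ0]
      rcases h with h | h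
      · exact h.2.2.le
      · exact h.2.2.2.le
    obtain ⟨h1, h2, h4, h5, -⟩ := hzD2 cc h
    have h4 := hfz _ _ h4
    have h5 := hfz _ _ h5
    refine ⟨?_, h5, hcc⟩
    rcases hrolle _ _ cc h1 h2 h4 h5 with h | h
    · have := hφ1 ⟨le_rfl, hm10.le⟩ ⟨h1.le, h.1.le⟩ h1
      linarith
    · exact h.2
  -- coefficients
  have hκ : ∀ x : ℝ, 0 < x → 0 < κ (1 / x) := fun x hx => hA2.2 _ (by positivity)
  have hκc : ContinuousOn (fun x : ℝ => κ (1 / x)) (Ioi 0) := by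
    apply hA2.1.continuousOn.comp
    · exact continuousOn_const.div continuousOn_id fun x hx => (ne_of_gt hx)
    · intro x hx
      exact mem_Ioi.2 (one_div_pos.2 hx)
  have hg1c : ContinuousOn (fun x => g1TV κ τ x / K) (Ioi 0) := by
    apply ContinuousOn.div_const
    exact continuousOn_const.div (continuousOn_const.mul hκc)
      fun x hx => (mul_pos hτ (hκ x hx)).ne'
  have hg2c : ContinuousOn (fun x => g2TV κ τ x) (Ioi 0) := by
    exact continuousOn_id.div (continuousOn_const.mul hκc)
      fun x hx => (mul_pos (by positivity) (hκ x hx)).ne'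
  have hg1p : ∀ x, 0 < x → 0 < g1TV κ τ x / K := by
    intro x hx
    have := hκ x hx
    unfold g1TV
    positivity
  have hg2p : ∀ x, 0 < x → 0 < g2TV κ τ x := by
    intro x hx
    have := hκ x hx
    unfold g2TV
    positivity
  have hdc : ContinuousOn (fun x => fdTV V' K x) (Ioi 0) := by
    exact (continuousOn_const.sub (hV'c.mono Ioi_subset_Ici_self)).div_const K
  have hdM : ∀ x, 0 < x → |fdTV V' K x| ≤ (K + V' UM) / K := by
    intro x hx
    have h1 := hV'pos x hx
    have h2 := hV'max x hx
    unfold fdTV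
    rw [abs_div, abs_of_pos hK]
    gcongr
    rw [abs_le]
    constructor <;> linarith
  have hode : ∀ (c μ : ℝ) (x y : ℝ),
      g1TV κ τ x * fTV V K c x + g2TV κ τ x * hTV V' K μ x * y =
      g1TV κ τ x / K * (φ x - c) + g2TV κ τ x * (fdTV V' K x + μ) * y := by
    intro c μ x y
    rw [hφdef]
    unfold fTV hTV
    ring
  have hmaxpt : ∀ (c μ : ℝ) (u w : ℝ → ℝ), (∀ z, 0 < u z) → ∀ z0, w z0 = 0 →
      (g1TV κ τ (u z0) / K * (φ (u z0) - c) + g2TV κ τ (u z0) * (fdTV V' K (u z0) + μ) * w z0 ≤ 0 →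
        φ (u z0) ≤ c) ∧
      (0 ≤ g1TV κ τ (u z0) / K * (φ (u z0) - c) + g2TV κ τ (u z0) * (fdTV V' K (u z0) + μ) * w z0 →
        c ≤ φ (u z0)) := by
    intro c μ u w hpos z0 h0
    rw [h0, mul_zero, add_zero]
    have hg := hg1p _ (hpos z0)
    constructor
    · intro h
      by_contra hcon
      push Not at hcon
      have := mul_pos hg (show 0 < φ (u z0) - c by linarith)
      linarith
    · intro h
      by_contra hcon
      push Not at hcon
      have := mul_neg_of_pos_of_neg hg (show φ (u z0) - c < 0 by linarith)
      linarith
  constructor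
  · intro ε hε
    obtain ⟨δ, hδ, H⟩ := absThm (J := Ioi (0 : ℝ)) isOpen_Ioi ordConnected_Ioi (φ := φ)
      (d := fun x => fdTV V' K x) (g1 := fun x => g1TV κ τ x / K) (g2 := fun x => g2TV κ τ x)
      (m := m1) (M0 := (K + V' UM) / K) (η1 := m2 - m1) hm10 (hφc.mono Ioi_subset_Ici_self)
      hdc hg1c hg2c hg1p hg2p hdM (by simp [fdTV, hm1K])
      (hφ1.mono fun x hx => ⟨le_of_lt hx.1, hx.2⟩) (by linarith)
      (by rw [add_sub_cancel]; exact hφ2) ε hε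
    refine ⟨δ, hδ, ?_⟩
    intro cc hc1 hc2 hD μ u w hsol hpos hHO
    obtain ⟨z1, z2, z3, z4, z5⟩ := hD1z cc hD
    obtain ⟨hub, hut, hwb, hwt, hne⟩ := hHO
    have hw := fun z => (hsol.2 z).congr_deriv (hode cc μ (u z) (w z))
    rw [← hφm1] at hc1 hc2
    have := H cc hc1 hc2 μ u w (u1f cc) hsol.1 hw hpos z1 z2 z4 hub hut hwb hwt hne ?_
    · rw [← hm1]; exact this
    have hle : ∀ z, u z ≤ u2f cc := by
      intro z
      by_contra hcon
      push Not at hcon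
      obtain ⟨z0, k1, k2, k3⟩ := max_point hsol.1 hw hub hut (z := z) (by linarith)
      have k4 := (hmaxpt cc μ u w hpos z0 k2).1 k3
      have k5 := hφ3 (mem_Ici.2 z3.le) (mem_Ici.2 (by linarith [k1 z])) (hcon.trans_le (k1 z))
      linarith
    intro z y hy1 hy2
    rcases le_total (u z) m2 with h | h
    · exact le_max_of_le_left (hφ2.antitoneOn ⟨hy1, by linarith⟩ ⟨by linarith, h⟩ hy2)
    · apply le_max_of_le_right
      rw [← z5]
      exact hφ3.monotoneOn (mem_Ici.2 h) (mem_Ici.2 z3.le) (hle z)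
  · intro ε hε
    have hmaps : MapsTo (fun x : ℝ => -x) (Iio 0) (Ioi 0) := fun x hx => by
      simp only [mem_Iio, mem_Ioi] at *
      linarith
    have hnegc : ContinuousOn (fun x : ℝ => -x) (Iio 0) := continuous_neg.continuousOn
    obtain ⟨δ, hδ, H⟩ := absThm (J := Iio (0 : ℝ)) isOpen_Iio ordConnected_Iio
      (φ := fun x => - φ (-x))
      (d := fun x => fdTV V' K (-x)) (g1 := fun x => g1TV κ τ (-x) / K)
      (g2 := fun x => g2TV κ τ (-x))
      (m := -m2) (M0 := (K + V' UM) / K) (η1 := m2 - m1) (by simp only [mem_Iio]; linarith)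
      (((hφc.mono Ioi_subset_Ici_self).comp hnegc hmaps).neg)
      (hdc.comp hnegc hmaps) (hg1c.comp hnegc hmaps) (hg2c.comp hnegc hmaps)
      (fun x hx => hg1p _ (hmaps hx)) (fun x hx => hg2p _ (hmaps hx))
      (fun x hx => hdM _ (hmaps hx)) (by simp [fdTV, hm2K])
      (fun x hx y hy hxy => by
        have h1 : x ≤ -m2 := hx.2
        have h2 : y ≤ -m2 := hy.2
        have := hφ3 (mem_Ici.2 (show m2 ≤ -y by linarith)) (mem_Ici.2 (show m2 ≤ -x by linarith))
          (neg_lt_neg hxy)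
        simp only
        linarith) (by linarith)
      (fun x hx y hy hxy => by
        have h1 := hx.1
        have h2 := hy.2
        have := hφ2 ⟨show m1 ≤ -y by linarith, by linarith⟩ ⟨by linarith, show -x ≤ m2 by linarith⟩
          (neg_lt_neg hxy)
        simp only
        linarith) ε hε
    refine ⟨δ, hδ, ?_⟩
    intro cc hc1 hc2 hD μ u w hsol hpos hHO
    obtain ⟨hub, hut, hwb, hwt, hne⟩ := hHO
    have hw := fun z => (hsol.2 z).congr_deriv (hode cc μ (u z) (w z))
    rw [← hφm2] at hc1 hc2
    have hz : m2 < u2f cc ∧ φ (u2f cc) = cc := by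
      rcases hD with h | h
      · exact ⟨(hD1z cc h).2.2.1, (hD1z cc h).2.2.2.2⟩
      · exact ⟨(hD2z cc h).1, (hD2z cc h).2.1⟩
    have hlow : ∀ z, u z ≤ m1 → cc ≤ φ (u z) := by
      intro z hzm
      rcases hD with h | h
      · obtain ⟨z1, z2, z3, z4, z5⟩ := hD1z cc h
        rw [← z4]
        refine hφ1.monotoneOn ⟨z1.le, z2.le⟩ ⟨(hpos z).le, hzm⟩ ?_
        by_contra hcon
        push Not at hcon
        obtain ⟨z0, k1, k2, k3⟩ := min_point hsol.1 hw hub hut (z := z) (by linarith)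
        have k4 := (hmaxpt cc μ u w hpos z0 k2).2 k3
        have k5 := hφ1 ⟨(hpos z0).le, by linarith [k1 z]⟩ ⟨z1.le, z2.le⟩ ((k1 z).trans_lt hcon)
        linarith
      · obtain ⟨z1, z2, z3⟩ := hD2z cc h
        exact z3.trans (hφ1.monotoneOn ⟨le_rfl, hm10.le⟩ ⟨(hpos z).le, hzm⟩ (hpos z).le)
    have := H (-cc) (by simp only [neg_neg]; linarith) (by simp only [neg_neg]; linarith) μ
      (fun z => - u z) (fun z => - w z) (-(u2f cc)) (fun z => (hsol.1 z).neg)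
      (fun z => (hw z).neg.congr_deriv (by simp only [neg_neg]; ring))
      (fun z => by simp only [mem_Iio]; linarith [hpos z])
      (by simp only [mem_Iio]; linarith) (by linarith) (by simp only [neg_neg]; rw [hz.2])
      hub.neg hut.neg (by simpa using hwb.neg) (by simpa using hwt.neg)
      (fun h => hne fun z => ⟨by linarith [(h z).1], by linarith [(h z).2]⟩) ?_
    · refine ⟨this.1, fun z => ?_⟩
      have h1 := this.2 z
      rw [← hm2]
      have h2 : (-u z - -m2) ^ 2 + (-w z) ^ 2 = (u z - m2) ^ 2 + (w z) ^ 2 := by ring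
      rw [h2] at h1
      exact h1
    intro z y hy1 hy2
    simp only [neg_neg]
    rcases le_total (u z) m1 with h | h
    · exact le_max_of_le_right (by linarith [hlow z h])
    · apply le_max_of_le_left
      have := hφ2.antitoneOn ⟨h, by linarith⟩ ⟨by linarith, by linarith⟩
        (show u z ≤ -y by linarith)
      linarith

end TrafficTW
end
end
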